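/- arXiv:1701.04633 — 4 statements merged into one kernel-verified Lean document; each statement's English description precedes it below -/
import Mathlib

section
/- Fix d ≥ 2. Let c_n^{(d)} be the number of subgroups Λ ⊆ ℤ^d of index n such that Λ = ρ_f(I) for some monic polynomial f ∈ ℤ[X] of degree d and some ideal I ⊆ ℤ[X]/(f), where ρ_f is the coordinate isomorphism ℤ[X]/(f) → ℤ^d with respect to the basis 1, X, …, X^{d-1}. Then lim_{N→∞} N^{-2} Σ_{n≤N} c_n^{(d)} = (1/2)·(∏_{i=2}^{d-1} ζ(i))·ζ(2d), where ζ is the Riemann zeta function (the product being empty, hence 1, when d = 2). -/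
/-!
Identify `ℤ^d` with the polynomials of degree `< d`. An ideal lattice in `ℤ^d` is then the set
`J_{<d}` of elements of degree `< d` of an ideal `J ⊆ ℤ[X]` containing a monic polynomial of
degree `d`, and its index is `[ℤ[X] : J]`. Let `𝓘_k` be the set of ideals of finite index in
`ℤ[X]` which contain a monic polynomial of degree `k`.

*Structure of ideal lattices.* If `J` has finite index and `a > 0` generates the coefficients of
`X^k` in `J_{<k+1}`, then `a` divides every element of `J_{<k+1}`. Hence
`J_{<k+1} = a • (J₀)_{<k+1}` with the colon ideal `J₀ = (J : a) ∈ 𝓘_k`, and the ideal lattices of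
finite index in `ℤ^{k+1}` correspond bijectively to the pairs `(a, J₀)` with `a ≥ 1` and
`J₀ ∈ 𝓘_k`, the index being `a^{k+1} [ℤ[X] : J₀]`.

*Counting ideals.* Put `M = (J₀)_{<k+1}`. The ideals `J ∈ 𝓘_{k+1}` with `J_{<k+1} = a • M` are
the `a J₀ + (X h + m)`, where `h ∈ J₀` is a fixed monic polynomial of degree `k` and `m` runs
through `M / a M`; there are `a^{k+1}` of them. So the number `S_k(N)` of ideals in `𝓘_k` of index
at most `N` satisfies `S_{k+1}(N) = ∑_a a^{k+1} S_k(N / a^{k+1})`, while the number of ideal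
lattices in `ℤ^{k+1}` of index at most `N` is `∑_a S_k(N / a^{k+1})`.

*Asymptotics.* `S_1(N) = N (N + 1) / 2`. If `S(N) / N² → L`, dominated convergence gives
`N⁻² ∑_a w(a) S(N / a^k) → L ∑_a w(a) a^{-2k}`. With `w(a) = a^k` this contributes the factors
`ζ(k)`, `2 ≤ k < d`, and in the last step, with `w = 1`, the factor `ζ(2d)`.
-/

open Polynomial Filter Topology

/-- A subgroup `Λ ⊆ ℤ^d` is an ideal lattice if it is the image, under the coordinate
isomorphism with respect to the basis `1, X, …, X^{d-1}`, of an ideal of `ℤ[X]/(f)` for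
some monic `f` of degree `d`. -/
def IsIdealLattice (d : ℕ) (Λ : AddSubgroup (Fin d → ℤ)) : Prop :=
  ∃ f : Polynomial ℤ, f.Monic ∧ f.natDegree = d ∧
    ∃ I : Ideal (Polynomial ℤ ⧸ Ideal.span {f}),
      ∀ v : Fin d → ℤ, v ∈ Λ ↔
        Ideal.Quotient.mk (Ideal.span {f}) (∑ i : Fin d, C (v i) * X ^ (i : ℕ)) ∈ I

open scoped Pointwise

/-! ### Truncations of ideals -/

section Truncation

variable {R : Type*} [CommRing R] {J J' : Ideal R[X]} {f : R[X]} {a b : R} {d k : ℕ}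

/-- The elements of degree less than `d` of an ideal `J` of `R[X]`, written `J_{<d}`, as a submodule
of the polynomials of degree less than `d`. -/
noncomputable def truncation (d : ℕ) (J : Ideal R[X]) : Submodule R (degreeLT R d) :=
  (J.restrictScalars R).comap (degreeLT R d).subtype

theorem mem_truncation {v : degreeLT R d} : v ∈ truncation d J ↔ (v : R[X]) ∈ J := Iff.rfl

/-- The ideal `J` contains a monic polynomial of degree exactly `k`. -/
def ContainsMonic (k : ℕ) (J : Ideal R[X]) : Prop := ∃ f ∈ J, f.Monic ∧ f.natDegree = k

/-- The ideals `J` containing a monic polynomial of degree `d` such that `J_{<d} = T`. The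
submodules `T` for which there is such a `J` are the ideal lattices. -/
def idealsWithTruncation (d : ℕ) (T : Submodule R (degreeLT R d)) : Set (Ideal R[X]) :=
  {J | ContainsMonic d J ∧ truncation d J = T}

theorem modByMonic_mem_degreeLT (p : R[X]) (hf : f.Monic) :
    p %ₘ f ∈ degreeLT R f.natDegree := by
  nontriviality R
  rw [mem_degreeLT, ← degree_eq_natDegree hf.ne_zero]
  exact degree_modByMonic_lt p hf

theorem modByMonic_mem_iff (hfJ : f ∈ J) (p : R[X]) : p %ₘ f ∈ J ↔ p ∈ J := by
  rw [modByMonic_eq_sub_mul_div]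
  exact J.sub_mem_iff_left (J.mul_mem_right _ hfJ)

theorem le_of_truncation_le (hfJ : f ∈ J) (hfJ' : f ∈ J') (hf : f.Monic) (hd : f.natDegree = d)
    (h : truncation d J ≤ truncation d J') : J ≤ J' := by
  subst hd
  intro p hp
  have hmod : (⟨p %ₘ f, modByMonic_mem_degreeLT p hf⟩ : degreeLT R f.natDegree) ∈
      truncation f.natDegree J := mem_truncation.2 ((modByMonic_mem_iff hfJ p).2 hp)
  exact (modByMonic_mem_iff hfJ' p).1 (mem_truncation.1 (h hmod))

theorem eq_of_truncation_eq (hfJ : f ∈ J) (hfJ' : f ∈ J') (hf : f.Monic) (hd : f.natDegree = d)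
    (h : truncation d J = truncation d J') : J = J' :=
  le_antisymm (le_of_truncation_le hfJ hfJ' hf hd h.le) (le_of_truncation_le hfJ' hfJ hf hd h.ge)

theorem mem_degreeLT_succ {p : R[X]} : p ∈ degreeLT R (k + 1) ↔ p.degree ≤ k := by
  rw [degreeLT_succ_eq_degreeLE, mem_degreeLE]

theorem ContainsMonic.le_of_truncation_succ_le (hJ : ContainsMonic k J)
    (h : truncation (k + 1) J ≤ truncation (k + 1) J') : J ≤ J' := by
  have mem_of_degree_le {p : R[X]} (hp : p ∈ J) (hdeg : p.degree ≤ k) : p ∈ J' :=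
    mem_truncation.1 <| @h ⟨p, mem_degreeLT_succ.2 hdeg⟩ (mem_truncation.2 hp)
  obtain ⟨f, hfJ, hf, hk⟩ := hJ
  have hfJ' : f ∈ J' := mem_of_degree_le hfJ (hk ▸ degree_le_natDegree)
  refine le_of_truncation_le hfJ hfJ' hf hk fun v hv => ?_
  exact mem_of_degree_le (mem_truncation.1 hv) (mem_degreeLT.1 v.2).le

theorem ContainsMonic.cardQuot_truncation (hJ : ContainsMonic d J) :
    (truncation d J).cardQuot = J.cardQuot := by
  obtain ⟨f, hfJ, hf, rfl⟩ := hJ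
  let ι := (degreeLT R f.natDegree).subtype.toAddMonoidHom
  have hsup : ι.range ⊔ J.toAddSubgroup = ⊤ := by
    refine eq_top_iff.2 fun p _ => ?_
    rw [← modByMonic_add_div p f]
    exact add_mem
      (AddSubgroup.mem_sup_left ⟨⟨p %ₘ f, modByMonic_mem_degreeLT p hf⟩, rfl⟩)
      (AddSubgroup.mem_sup_right (J.mul_mem_right _ hfJ))
  calc (J.toAddSubgroup.comap ι).index
      = J.toAddSubgroup.relIndex ι.range := AddSubgroup.index_comap _ _
    _ = J.toAddSubgroup.relIndex (ι.range ⊔ J.toAddSubgroup) :=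
        (AddSubgroup.relIndex_sup_right _ _).symm
    _ = J.cardQuot := by rw [hsup, AddSubgroup.relIndex_top_right]; rfl

theorem ContainsMonic.succ [Nontrivial R] (hJ : ContainsMonic k J) : ContainsMonic (k + 1) J := by
  obtain ⟨h, hhJ, hh, rfl⟩ := hJ
  exact ⟨X * h, J.mul_mem_left X hhJ, monic_X.mul hh, natDegree_X_mul hh.ne_zero⟩

theorem containsMonic_zero_iff : ContainsMonic 0 J ↔ J = ⊤ := by
  constructor
  · rintro ⟨h, hJ, hh, hd⟩
    rw [hh.natDegree_eq_zero.1 hd] at hJ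
    exact (Ideal.eq_top_iff_one J).2 hJ
  · rintro rfl
    exact ⟨1, trivial, monic_one, natDegree_one⟩

theorem mem_smul_sup_span_singleton {p : R[X]} :
    p ∈ a • J ⊔ Ideal.span {f} ↔ ∃ j ∈ J, ∃ q, a • j + q * f = p := by
  simp only [Submodule.mem_sup, Submodule.mem_smul_pointwise_iff_exists,
    Ideal.mem_span_singleton', exists_exists_and_eq_and, exists_exists_eq_and]

theorem self_mem_smul_sup_span_singleton (a : R) (J : Ideal R[X]) (f : R[X]) :
    f ∈ a • J ⊔ Ideal.span {f} :=
  Ideal.mem_sup_right (Ideal.mem_span_singleton_self f)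

theorem truncation_smul_sup_span_singleton (a : R) (hfJ : f ∈ J) (hf : f.Monic)
    (hd : f.natDegree = d) : truncation d (a • J ⊔ Ideal.span {f}) = a • truncation d J := by
  subst hd
  nontriviality R
  ext v
  rw [mem_truncation, mem_smul_sup_span_singleton, Submodule.mem_smul_pointwise_iff_exists]
  constructor
  · rintro ⟨j, hj, q, hv⟩
    refine ⟨⟨j %ₘ f, modByMonic_mem_degreeLT j hf⟩,
      mem_truncation.2 ((modByMonic_mem_iff hfJ j).2 hj), Subtype.ext ?_⟩
    have hdeg : (v : R[X]).degree < f.degree := by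
      rw [degree_eq_natDegree hf.ne_zero]
      exact mem_degreeLT.1 v.2
    calc a • (j %ₘ f) = (a • j + q * f) %ₘ f := by
          rw [add_modByMonic, smul_modByMonic, mul_self_modByMonic hf, add_zero]
      _ = v := by rw [hv, (modByMonic_eq_self_iff hf).2 hdeg]
  · rintro ⟨w, hw, rfl⟩
    exact ⟨w, mem_truncation.1 hw, 0, by simp⟩

theorem ContainsMonic.dvd_of_smul_truncation_le (hJ : ContainsMonic k J)
    (h : a • truncation (k + 1) J ≤ b • truncation (k + 1) J') : b ∣ a := by
  obtain ⟨f, hfJ, hf, rfl⟩ := hJ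
  obtain ⟨w, -, hw⟩ := h (Submodule.smul_mem_pointwise_smul
    (⟨f, mem_degreeLT_succ.2 degree_le_natDegree⟩ : degreeLT R _) a _ hfJ)
  have htop := congrArg (fun v : degreeLT R _ => (v : R[X]).coeff f.natDegree) hw
  exact ⟨(w : R[X]).coeff f.natDegree, by simpa [hf.coeff_natDegree] using htop.symm⟩

theorem smul_sup_span_singleton_mem_idealsWithTruncation (a : R) (hfJ : f ∈ J) (hf : f.Monic)
    (hd : f.natDegree = d) :
    a • J ⊔ Ideal.span {f} ∈ idealsWithTruncation d (a • truncation d J) :=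
  ⟨⟨f, self_mem_smul_sup_span_singleton a J f, hf, hd⟩,
    truncation_smul_sup_span_singleton a hfJ hf hd⟩

end Truncation

/-! ### Colon ideals over a principal ideal domain -/

section PrincipalIdealDomain

variable {R : Type*} [CommRing R] {J : Ideal R[X]} {a : R} {n : ℕ}

theorem mem_leadingCoeffNth_iff_coeff {x : R} :
    x ∈ J.leadingCoeffNth n ↔ ∃ p ∈ J, p.degree ≤ n ∧ p.coeff n = x := by
  simp only [Ideal.leadingCoeffNth, Ideal.degreeLE, Submodule.mem_map, lcoeff_apply,
    Submodule.mem_inf, mem_degreeLE]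
  exact exists_congr fun p => by tauto

theorem degree_sub_le_of_coeff_succ_eq {p q : R[X]} (hp : p.degree ≤ (n + 1 : ℕ))
    (hq : q.degree ≤ (n + 1 : ℕ)) (h : p.coeff (n + 1) = q.coeff (n + 1)) :
    (p - q).degree ≤ n := by
  rw [degree_le_iff_coeff_zero] at *
  intro m hm
  rw [Nat.cast_lt] at hm
  rcases (Nat.succ_le_of_lt hm).eq_or_lt with rfl | hlt
  · rw [coeff_sub, h, sub_self]
  · rw [coeff_sub, hp m (by exact_mod_cast hlt), hq m (by exact_mod_cast hlt), sub_zero]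

theorem ne_zero_of_leadingCoeffNth_eq_span (hJ : J.leadingCoeffNth 0 ≠ ⊥)
    (ha : J.leadingCoeffNth n = Ideal.span {a}) : a ≠ 0 := by
  rintro rfl
  refine ne_bot_of_le_ne_bot hJ (J.leadingCoeffNth_mono n.zero_le) ?_
  rw [ha, Ideal.span_singleton_eq_bot]

variable [IsDomain R] [IsPrincipalIdealRing R]

/-- Write `b = c m` with `b` and `c` the generators in degrees `n` and `n + 1`. For `p ∈ J` of
degree `n + 1` with top coefficient `c e`, and `g ∈ J` of degree `n` with top coefficient `b`, the
polynomial `m p - e X g ∈ J` has degree at most `n`. By induction `b` divides it, as well as `g`,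
hence `c m ∣ m p`. -/
theorem C_dvd_of_leadingCoeffNth_eq_span (hJ : J.leadingCoeffNth 0 ≠ ⊥) {c : R}
    (hc : J.leadingCoeffNth n = Ideal.span {c}) {p : R[X]} (hp : p ∈ J) (hdeg : p.degree ≤ n) :
    C c ∣ p := by
  induction n generalizing c p with
  | zero =>
    rw [eq_C_of_degree_le_zero hdeg] at hp ⊢
    rw [← J.mem_leadingCoeffNth_zero, hc, Ideal.mem_span_singleton] at hp
    exact map_dvd C hp
  | succ n ih =>
    obtain ⟨b, hb⟩ := (IsPrincipalIdealRing.principal (J.leadingCoeffNth n)).principal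
    have mem_b : b ∈ J.leadingCoeffNth n := hb ▸ Ideal.mem_span_singleton_self b
    obtain ⟨m, rfl⟩ : c ∣ b :=
      Ideal.mem_span_singleton.1 (hc ▸ J.leadingCoeffNth_mono n.le_succ mem_b)
    have hm : m ≠ 0 := right_ne_zero_of_mul (ne_zero_of_leadingCoeffNth_eq_span hJ hb)
    obtain ⟨g, hg, hgdeg, hgn⟩ := mem_leadingCoeffNth_iff_coeff.1 mem_b
    obtain ⟨e, he⟩ : c ∣ p.coeff (n + 1) :=
      Ideal.mem_span_singleton.1 (hc ▸ mem_leadingCoeffNth_iff_coeff.2 ⟨p, hp, hdeg, rfl⟩)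
    have hsub : C (c * m) ∣ m • p - e • (X * g) := by
      refine ih hb (J.sub_mem (J.smul_of_tower_mem m hp)
        (J.smul_of_tower_mem e (J.mul_mem_left X hg))) ?_
      refine degree_sub_le_of_coeff_succ_eq ((degree_smul_le m p).trans hdeg)
        ((degree_smul_le e _).trans ?_) ?_
      · rw [degree_mul, degree_X, add_comm, Nat.cast_add_one]
        exact add_le_add_left hgdeg 1
      · rw [coeff_smul, coeff_smul, coeff_X_mul, he, hgn, smul_eq_mul, smul_eq_mul]
        ring
    have hmul : C m * C c ∣ C m * p := by
      rw [← C_mul, mul_comm m, ← smul_eq_C_mul]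
      exact (dvd_sub_left (dvd_smul_of_dvd e ((ih hb hg hgdeg).mul_left X))).1 hsub
    exact (mul_dvd_mul_iff_left (C_ne_zero.2 hm)).1 hmul

theorem exists_mem_colon_C_mul_eq (hJ : J.leadingCoeffNth 0 ≠ ⊥)
    (ha : J.leadingCoeffNth n = Ideal.span {a}) {p : R[X]} (hp : p ∈ J) (hdeg : p.degree ≤ n) :
    ∃ q ∈ J.colon {C a}, q.degree ≤ n ∧ C a * q = p := by
  obtain ⟨q, rfl⟩ := C_dvd_of_leadingCoeffNth_eq_span hJ ha hp hdeg
  rw [degree_C_mul (ne_zero_of_leadingCoeffNth_eq_span hJ ha)] at hdeg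
  exact ⟨q, Submodule.mem_colon_singleton.2 (by rwa [smul_eq_mul, mul_comm]), hdeg, rfl⟩

theorem containsMonic_colon (hJ : J.leadingCoeffNth 0 ≠ ⊥)
    (ha : J.leadingCoeffNth n = Ideal.span {a}) : ContainsMonic n (J.colon {C a}) := by
  obtain ⟨p, hp, hdeg, hcoeff⟩ :=
    mem_leadingCoeffNth_iff_coeff.1 (ha.ge (Ideal.mem_span_singleton_self a))
  obtain ⟨q, hq, hqdeg, rfl⟩ := exists_mem_colon_C_mul_eq hJ ha hp hdeg
  rw [coeff_C_mul, mul_eq_left₀ (ne_zero_of_leadingCoeffNth_eq_span hJ ha)] at hcoeff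
  have hqdeg' := natDegree_le_of_degree_le hqdeg
  exact ⟨q, hq, monic_of_natDegree_le_of_coeff_eq_one n hqdeg' hcoeff,
    natDegree_eq_of_le_of_coeff_ne_zero hqdeg' (hcoeff ▸ one_ne_zero)⟩

theorem truncation_succ_eq_smul_colon (hJ : J.leadingCoeffNth 0 ≠ ⊥)
    (ha : J.leadingCoeffNth n = Ideal.span {a}) :
    truncation (n + 1) J = a • truncation (n + 1) (J.colon {C a}) := by
  refine le_antisymm (fun v hv => ?_) ?_
  · obtain ⟨q, hq, hqdeg, hqv⟩ :=
      exists_mem_colon_C_mul_eq hJ ha (mem_truncation.1 hv) (mem_degreeLT_succ.1 v.2)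
    rw [Submodule.mem_smul_pointwise_iff_exists]
    exact ⟨⟨q, mem_degreeLT_succ.2 hqdeg⟩, mem_truncation.2 hq,
      Subtype.ext ((smul_eq_C_mul a).trans hqv)⟩
  · rintro _ ⟨w, hw, rfl⟩
    have haw := Submodule.mem_colon_singleton.1 (mem_truncation.1 hw)
    rw [smul_eq_mul, mul_comm, ← smul_eq_C_mul] at haw
    exact mem_truncation.2 haw

end PrincipalIdealDomain

/-! ### Ideals with a given truncation -/

section Fibre

variable {R : Type*} [CommRing R] {J J₀ : Ideal R[X]} {f g : R[X]} {a : R} {d k : ℕ}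

section Nontrivial

variable [Nontrivial R]

theorem monic_add_coe_degreeLT (hf : f.Monic) (hd : f.natDegree = d) (v : degreeLT R d) :
    (f + v).Monic ∧ (f + v : R[X]).natDegree = d := by
  have hdeg : (v : R[X]).degree < f.degree := by
    rw [degree_eq_natDegree hf.ne_zero, hd]
    exact mem_degreeLT.1 v.2
  exact ⟨hf.add_of_left hdeg, (natDegree_add_eq_left_of_degree_lt hdeg).trans hd⟩

theorem sub_mem_degreeLT_of_monic (hf : f.Monic) (hg : g.Monic) (hfd : f.natDegree = d)
    (hgd : g.natDegree = d) : f - g ∈ degreeLT R d := by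
  have hfdeg : f.degree = d := hfd ▸ degree_eq_natDegree hf.ne_zero
  have hgdeg : g.degree = d := hgd ▸ degree_eq_natDegree hg.ne_zero
  rw [mem_degreeLT, ← hfdeg]
  exact degree_sub_lt_left (hfdeg.trans hgdeg.symm) hf.ne_zero (hf.trans hg.symm)

theorem smul_sup_span_add_eq_iff (hfJ : f ∈ J) (hf : f.Monic) (hd : f.natDegree = d)
    {v w : degreeLT R d} (hv : v ∈ truncation d J) (hw : w ∈ truncation d J) :
    a • J ⊔ Ideal.span {f + (v : R[X])} = a • J ⊔ Ideal.span {f + (w : R[X])} ↔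
      -v + w ∈ a • truncation d J := by
  obtain ⟨hmonic, hdeg⟩ := monic_add_coe_degreeLT hf hd v
  obtain ⟨hmonic', hdeg'⟩ := monic_add_coe_degreeLT hf hd w
  have htrunc := truncation_smul_sup_span_singleton a (J.add_mem hfJ hv) hmonic hdeg
  have htrunc' := truncation_smul_sup_span_singleton a (J.add_mem hfJ hw) hmonic' hdeg'
  have hv_mem := self_mem_smul_sup_span_singleton a J (f + (v : R[X]))
  have hw_mem := self_mem_smul_sup_span_singleton a J (f + (w : R[X]))
  have hdiff : f + (w : R[X]) = f + v + ((-v + w : degreeLT R d) : R[X]) := by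
    push_cast
    ring
  rw [← htrunc, mem_truncation]
  constructor
  · intro h
    rw [← h, hdiff] at hw_mem
    exact (Ideal.add_mem_iff_right _ hv_mem).1 hw_mem
  · intro h
    refine eq_of_truncation_eq ?_ hw_mem hmonic' hdeg' (htrunc.trans htrunc'.symm)
    rw [hdiff]
    exact Ideal.add_mem _ hv_mem h

end Nontrivial

theorem ncard_range_eq_index {A β : Type*} [AddGroup A] {H : AddSubgroup A} {φ : A → β}
    (hφ : ∀ v w, φ v = φ w ↔ -v + w ∈ H) : (Set.range φ).ncard = H.index := by
  have hker : Setoid.ker φ = QuotientAddGroup.leftRel H :=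
    Setoid.ext fun v w => by rw [Setoid.ker_def, hφ, QuotientAddGroup.leftRel_apply]
  calc (Set.range φ).ncard = Nat.card (Quotient (Setoid.ker φ)) :=
        Nat.card_congr (Setoid.quotientKerEquivRange φ).symm
    _ = H.index := by rw [hker]; rfl

variable [IsDomain R]

theorem smul_submodule_injective {M : Type*} [AddCommGroup M] [Module R M]
    [Module.IsTorsionFree R M] (ha : a ≠ 0) :
    Function.Injective (a • · : Submodule R M → Submodule R M) :=
  Submodule.map_injective_of_injective (smul_right_injective M ha)

/-- For `h ∈ J₀` monic of degree `k` we have `a h ∈ J`, so the element `a (g - X h)` of `J`, being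
of degree at most `k`, lies in `a • truncation (k + 1) J₀`. -/
theorem mem_of_mem_of_truncation_eq_smul (ha : a ≠ 0) (hJ₀ : ContainsMonic k J₀)
    (hJ : truncation (k + 1) J = a • truncation (k + 1) J₀) (hgJ : g ∈ J) (hg : g.Monic)
    (hd : g.natDegree = k + 1) : g ∈ J₀ := by
  obtain ⟨h, hhJ₀, hh, rfl⟩ := hJ₀
  have hahJ : a • h ∈ J := by
    have : a • (⟨h, mem_degreeLT_succ.2 degree_le_natDegree⟩ : degreeLT R _) ∈
        truncation (h.natDegree + 1) J :=
      hJ ▸ Submodule.smul_mem_pointwise_smul _ a _ (mem_truncation.2 hhJ₀)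
    exact mem_truncation.1 this
  let v : degreeLT R (h.natDegree + 1) :=
    ⟨g - X * h, sub_mem_degreeLT_of_monic hg (monic_X.mul hh) hd (natDegree_X_mul hh.ne_zero)⟩
  have hav : a • v ∈ truncation (h.natDegree + 1) J := by
    rw [mem_truncation, SetLike.val_smul, smul_sub, ← mul_smul_comm]
    exact J.sub_mem (J.smul_of_tower_mem a hgJ) (J.mul_mem_left X hahJ)
  rw [hJ, Submodule.mem_smul_pointwise_iff_exists] at hav
  obtain ⟨w, hw, hwv⟩ := hav
  rw [smul_right_injective _ ha hwv] at hw
  exact (J₀.sub_mem_iff_left (J₀.mul_mem_left X hhJ₀)).1 (mem_truncation.1 hw)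

/-- A monic polynomial of `J₀` of degree `k + 1` is `X h + v` with `v` in the truncation. -/
theorem idealsWithTruncation_smul_eq_range (ha : a ≠ 0) {h : R[X]} (hhJ₀ : h ∈ J₀) (hh : h.Monic)
    (hk : h.natDegree = k) :
    idealsWithTruncation (k + 1) (a • truncation (k + 1) J₀) =
      Set.range fun v : truncation (k + 1) J₀ =>
        a • J₀ ⊔ Ideal.span {X * h + ((v : degreeLT R (k + 1)) : R[X])} := by
  have hXh : X * h ∈ J₀ := J₀.mul_mem_left X hhJ₀
  have hXh_deg : (X * h).natDegree = k + 1 := hk ▸ natDegree_X_mul hh.ne_zero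
  refine Set.Subset.antisymm ?_ (Set.range_subset_iff.2 fun v => ?_)
  · rintro J ⟨⟨g, hgJ, hg, hd⟩, hJ⟩
    have hgJ₀ : g ∈ J₀ := mem_of_mem_of_truncation_eq_smul ha ⟨h, hhJ₀, hh, hk⟩ hJ hgJ hg hd
    have hsub := sub_mem_degreeLT_of_monic hg (monic_X.mul hh) hd hXh_deg
    refine ⟨⟨⟨g - X * h, hsub⟩, mem_truncation.2 (J₀.sub_mem hgJ₀ hXh)⟩, ?_⟩
    beta_reduce
    rw [add_sub_cancel]
    exact eq_of_truncation_eq (self_mem_smul_sup_span_singleton a J₀ g) hgJ hg hd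
      ((truncation_smul_sup_span_singleton a hgJ₀ hg hd).trans hJ.symm)
  · obtain ⟨hmonic, hdeg⟩ := monic_add_coe_degreeLT (monic_X.mul hh) hXh_deg v
    exact smul_sup_span_singleton_mem_idealsWithTruncation a (J₀.add_mem hXh v.2) hmonic hdeg

theorem ncard_idealsWithTruncation_smul (ha : a ≠ 0) (hJ₀ : ContainsMonic k J₀) :
    (idealsWithTruncation (k + 1) (a • truncation (k + 1) J₀)).ncard =
      (a • truncation (k + 1) J₀).toAddSubgroup.relIndex (truncation (k + 1) J₀).toAddSubgroup := by
  obtain ⟨h, hhJ₀, hh, hk⟩ := hJ₀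
  rw [idealsWithTruncation_smul_eq_range ha hhJ₀ hh hk]
  exact ncard_range_eq_index fun v w => smul_sup_span_add_eq_iff (J₀.mul_mem_left X hhJ₀)
    (monic_X.mul hh) (hk ▸ natDegree_X_mul hh.ne_zero) v.2 w.2

end Fibre

/-! ### Counting by index -/

section Int

variable {M : Type*} [AddCommGroup M] [Module.Free ℤ M] [Module.Finite ℤ M]

theorem relIndex_natCast_smul (a : ℕ) {T : Submodule ℤ M} (hT : T.cardQuot ≠ 0) :
    ((a : ℤ) • T).toAddSubgroup.relIndex T.toAddSubgroup = a ^ Module.finrank ℤ M := by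
  have : T.toAddSubgroup.FiniteIndex := ⟨hT⟩
  have hmap : ((a : ℤ) • T).toAddSubgroup = T.toAddSubgroup.map (nsmulAddMonoidHom (α := M) a) := by
    ext x
    simp [AddSubgroup.mem_smul_pointwise_iff_exists]
  rw [hmap, AddSubgroup.relIndex_map_nsmul, AddSubgroup.finrank_eq_of_finiteIndex]

theorem cardQuot_natCast_smul (a : ℕ) (T : Submodule ℤ M) :
    ((a : ℤ) • T).cardQuot = a ^ Module.finrank ℤ M * T.cardQuot := by
  have hle : ((a : ℤ) • T).toAddSubgroup ≤ T.toAddSubgroup := T.smul_le_self_of_tower (a : ℤ)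
  have hmul : ((a : ℤ) • T).toAddSubgroup.relIndex T.toAddSubgroup * T.cardQuot =
    ((a : ℤ) • T).cardQuot := AddSubgroup.relIndex_mul_index hle
  rw [← hmul]
  rcases eq_or_ne T.cardQuot 0 with hT | hT
  · rw [hT, mul_zero, mul_zero]
  · rw [relIndex_natCast_smul a hT]

end Int

section Counting

variable {J : Ideal ℤ[X]} {d k N : ℕ}

theorem leadingCoeffNth_zero_ne_bot (hJ : J.cardQuot ≠ 0) : J.leadingCoeffNth 0 ≠ ⊥ := by
  have hmem : (J.cardQuot : ℤ) ∈ J.leadingCoeffNth 0 := by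
    rw [Ideal.mem_leadingCoeffNth_zero]
    simpa using! J.toAddSubgroup.nsmul_index_mem 1
  intro hbot
  rw [hbot, Ideal.mem_bot] at hmem
  exact hJ (by exact_mod_cast hmem)

theorem finrank_degreeLT {R : Type*} [CommRing R] [Nontrivial R] (d : ℕ) :
    Module.finrank R (degreeLT R d) = d :=
  (degreeLTEquiv R d).finrank_eq.trans (Module.finrank_fin_fun R)

/-- The ideals of `ℤ[X]` containing a monic polynomial of degree `k` and of index at most `N`. The
lower bound `1` excludes infinite index, for which `cardQuot` is `0`. -/
def idealsUpTo (k N : ℕ) : Set (Ideal ℤ[X]) :=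
  {J | ContainsMonic k J ∧ J.cardQuot ∈ Finset.Icc 1 N}

/-- The ideal lattices of index at most `N`, as submodules of the polynomials of degree less than
`d`. -/
def latticesUpTo (d N : ℕ) : Set (Submodule ℤ (degreeLT ℤ d)) :=
  {T | (idealsWithTruncation d T).Nonempty ∧ T.cardQuot ∈ Finset.Icc 1 N}

/-- The lattice `a • J_{<k+1}` attached to a pair `(a, J)`. -/
noncomputable def scaledTruncation (k : ℕ) (p : ℕ × Ideal ℤ[X]) :
    Submodule ℤ (degreeLT ℤ (k + 1)) :=
  (p.1 : ℤ) • truncation (k + 1) p.2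

/-- The pairs `(a, J)`, with `J` containing a monic polynomial of degree `k`, whose lattice
`a • J_{<k+1}` has index at most `N`. As the index is positive, `a ≠ 0`. -/
def scaledPairs (k N : ℕ) : Set (ℕ × Ideal ℤ[X]) :=
  {p | ContainsMonic k p.2 ∧ (scaledTruncation k p).cardQuot ∈ Finset.Icc 1 N}

theorem cardQuot_scaledTruncation {p : ℕ × Ideal ℤ[X]} (hp : ContainsMonic k p.2) :
    (scaledTruncation k p).cardQuot = p.1 ^ (k + 1) * p.2.cardQuot := by
  rw [scaledTruncation, cardQuot_natCast_smul, finrank_degreeLT, hp.succ.cardQuot_truncation]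

theorem ne_zero_of_mem_scaledPairs {p : ℕ × Ideal ℤ[X]} (hp : p ∈ scaledPairs k N) :
    p.1 ≠ 0 ∧ p.2.cardQuot ≠ 0 := by
  have hpos : (scaledTruncation k p).cardQuot ≠ 0 :=
    (Nat.one_le_iff_ne_zero.1 (Finset.mem_Icc.1 hp.2).1)
  rw [cardQuot_scaledTruncation hp.1, mul_ne_zero_iff, pow_ne_zero_iff k.succ_ne_zero] at hpos
  exact hpos

theorem idealsUpTo_eq_biUnion (d N : ℕ) :
    idealsUpTo d N = ⋃ T ∈ latticesUpTo d N, idealsWithTruncation d T := by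
  ext J
  rw [Set.mem_iUnion₂]
  constructor
  · rintro ⟨hJ, hcard⟩
    exact ⟨truncation d J, ⟨⟨J, hJ, rfl⟩, hJ.cardQuot_truncation ▸ hcard⟩, hJ, rfl⟩
  · rintro ⟨_, ⟨-, hcard⟩, hJ, rfl⟩
    exact ⟨hJ, hJ.cardQuot_truncation ▸ hcard⟩

theorem exists_scaledTruncation_eq (hJ : J.cardQuot ≠ 0) (k : ℕ) :
    ∃ p : ℕ × Ideal ℤ[X], ContainsMonic k p.2 ∧ scaledTruncation k p = truncation (k + 1) J := by
  obtain ⟨b, hb⟩ := (IsPrincipalIdealRing.principal (J.leadingCoeffNth k)).principal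
  have hbot := leadingCoeffNth_zero_ne_bot hJ
  have hspan : J.leadingCoeffNth k = Ideal.span {(b.natAbs : ℤ)} := by
    rw [Int.span_natAbs]
    exact hb
  exact ⟨(b.natAbs, J.colon {C (b.natAbs : ℤ)}), containsMonic_colon hbot hspan,
    (truncation_succ_eq_smul_colon hbot hspan).symm⟩

theorem scaledTruncation_injOn (k N : ℕ) : Set.InjOn (scaledTruncation k) (scaledPairs k N) := by
  rintro ⟨a, J⟩ hp ⟨b, J'⟩ hq heq
  have hab : a = b := Nat.dvd_antisymm
    (Int.natCast_dvd_natCast.1 (hq.1.dvd_of_smul_truncation_le heq.ge))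
    (Int.natCast_dvd_natCast.1 (hp.1.dvd_of_smul_truncation_le heq.le))
  subst hab
  have htrunc : truncation (k + 1) J = truncation (k + 1) J' :=
    smul_submodule_injective (Nat.cast_ne_zero.2 (ne_zero_of_mem_scaledPairs hp).1) heq
  rw [Prod.mk.injEq]
  exact ⟨rfl, le_antisymm (hp.1.le_of_truncation_succ_le htrunc.le)
    (hq.1.le_of_truncation_succ_le htrunc.ge)⟩

theorem scaledTruncation_bijOn (k N : ℕ) :
    Set.BijOn (scaledTruncation k) (scaledPairs k N) (latticesUpTo (k + 1) N) := by
  refine ⟨fun p hp => ⟨?_, hp.2⟩, scaledTruncation_injOn k N, ?_⟩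
  · obtain ⟨f, hfJ, hf, hd⟩ := hp.1.succ
    exact ⟨_, smul_sup_span_singleton_mem_idealsWithTruncation _ hfJ hf hd⟩
  · rintro _ ⟨⟨J, hJ, rfl⟩, hcard⟩
    have hJ0 : J.cardQuot ≠ 0 := by
      rw [← hJ.cardQuot_truncation]
      exact Nat.one_le_iff_ne_zero.1 (Finset.mem_Icc.1 hcard).1
    obtain ⟨p, hp, heq⟩ := exists_scaledTruncation_eq hJ0 k
    exact ⟨p, ⟨hp, heq ▸ hcard⟩, heq⟩

theorem ncard_idealsWithTruncation_scaledTruncation {p : ℕ × Ideal ℤ[X]}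
    (hp : p ∈ scaledPairs k N) :
    (idealsWithTruncation (k + 1) (scaledTruncation k p)).ncard = p.1 ^ (k + 1) := by
  obtain ⟨ha, hcard⟩ := ne_zero_of_mem_scaledPairs hp
  rw [scaledTruncation, ncard_idealsWithTruncation_smul (Nat.cast_ne_zero.2 ha) hp.1,
    relIndex_natCast_smul _ (hp.1.succ.cardQuot_truncation.trans_ne hcard), finrank_degreeLT]

theorem finite_idealsWithTruncation {T : Submodule ℤ (degreeLT ℤ (k + 1))}
    (hT : T ∈ latticesUpTo (k + 1) N) : (idealsWithTruncation (k + 1) T).Finite := by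
  obtain ⟨p, hp, rfl⟩ := (scaledTruncation_bijOn k N).surjOn hT
  refine Set.finite_of_ncard_ne_zero ?_
  rw [ncard_idealsWithTruncation_scaledTruncation hp]
  exact pow_ne_zero _ (ne_zero_of_mem_scaledPairs hp).1

theorem pow_mul_mem_Icc_iff {a n : ℕ} (ha : 1 ≤ a) (hd : d ≠ 0) :
    a ^ d * n ∈ Finset.Icc 1 N ↔ a ∈ Finset.Icc 1 N ∧ n ∈ Finset.Icc 1 (N / a ^ d) := by
  have hpow : 0 < a ^ d := pow_pos ha d
  simp only [Finset.mem_Icc, Nat.le_div_iff_mul_le hpow, mul_comm n]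
  constructor
  · rintro ⟨hpos, hle⟩
    have hn : 1 ≤ n := Nat.pos_of_mul_pos_left hpos
    exact ⟨⟨ha, (Nat.le_self_pow hd a).trans ((Nat.le_mul_of_pos_right _ hn).trans hle)⟩, hn, hle⟩
  · rintro ⟨-, hn, hle⟩
    exact ⟨Nat.mul_pos hpow hn, hle⟩

theorem scaledPairs_eq_biUnion (k N : ℕ) :
    scaledPairs k N =
      ⋃ a ∈ Finset.Icc 1 N, Prod.mk a '' idealsUpTo k (N / a ^ (k + 1)) := by
  ext ⟨a, J⟩
  simp only [Set.mem_iUnion₂, Set.mem_image, Prod.mk.injEq]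
  constructor
  · intro hp
    have ha : 1 ≤ a := Nat.one_le_iff_ne_zero.2 (ne_zero_of_mem_scaledPairs hp).1
    have hcard := hp.2
    rw [cardQuot_scaledTruncation hp.1, pow_mul_mem_Icc_iff ha k.succ_ne_zero] at hcard
    exact ⟨a, hcard.1, J, ⟨hp.1, hcard.2⟩, rfl, rfl⟩
  · rintro ⟨a, ha, J, ⟨hJ, hcard⟩, rfl, rfl⟩
    refine ⟨hJ, ?_⟩
    rw [cardQuot_scaledTruncation hJ,
      pow_mul_mem_Icc_iff (Finset.mem_Icc.1 ha).1 k.succ_ne_zero]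
    exact ⟨ha, hcard⟩

theorem finite_idealsUpTo (k N : ℕ) : (idealsUpTo k N).Finite := by
  induction k generalizing N with
  | zero => exact (Set.finite_singleton ⊤).subset fun J hJ => containsMonic_zero_iff.1 hJ.1
  | succ k ih =>
    have hpairs : (scaledPairs k N).Finite := by
      rw [scaledPairs_eq_biUnion]
      exact (Finset.finite_toSet _).biUnion fun a _ => (ih _).image _
    have hlattices : (latticesUpTo (k + 1) N).Finite :=
      (scaledTruncation_bijOn k N).image_eq ▸ hpairs.image _
    rw [idealsUpTo_eq_biUnion]
    exact hlattices.biUnion fun T hT => finite_idealsWithTruncation hT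

theorem finite_latticesUpTo (d N : ℕ) : (latticesUpTo d N).Finite := by
  refine ((finite_idealsUpTo d N).image (truncation d)).subset ?_
  rintro _ ⟨⟨J, hJ, rfl⟩, hcard⟩
  exact ⟨J, ⟨hJ, hJ.cardQuot_truncation ▸ hcard⟩, rfl⟩

theorem finsum_mem_biUnion_image_prodMk {α β : Type*} {t : Finset α} {F : α → Set β}
    (hF : ∀ a ∈ t, (F a).Finite) (w : α → ℕ) :
    ∑ᶠ p ∈ ⋃ a ∈ t, Prod.mk a '' F a, w p.1 = ∑ a ∈ t, w a * (F a).ncard := by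
  have hdisj : (t : Set α).PairwiseDisjoint fun a => Prod.mk a '' F a := by
    intro a _ b _ hab
    rw [Function.onFun, Set.disjoint_left]
    rintro _ ⟨x, -, rfl⟩ ⟨y, -, hxy⟩
    exact hab (congrArg Prod.fst hxy).symm
  calc ∑ᶠ p ∈ ⋃ a ∈ t, Prod.mk a '' F a, w p.1
      = ∑ᶠ a ∈ (t : Set α), ∑ᶠ p ∈ Prod.mk a '' F a, w p.1 :=
        finsum_mem_biUnion hdisj t.finite_toSet fun a ha => (hF a ha).image _
    _ = ∑ a ∈ t, ∑ᶠ p ∈ Prod.mk a '' F a, w p.1 := finsum_mem_coe_finset _ _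
    _ = ∑ a ∈ t, w a * (F a).ncard := by
        refine Finset.sum_congr rfl fun a _ => ?_
        rw [finsum_mem_image (Prod.mk_right_injective a).injOn, ← finsum_one, mul_finsum_mem]
        simp

theorem ncard_latticesUpTo_succ (k N : ℕ) :
    (latticesUpTo (k + 1) N).ncard =
      ∑ a ∈ Finset.Icc 1 N, (idealsUpTo k (N / a ^ (k + 1))).ncard := by
  calc (latticesUpTo (k + 1) N).ncard = (scaledPairs k N).ncard := by
        rw [← (scaledTruncation_bijOn k N).image_eq, (scaledTruncation_injOn k N).ncard_image]
    _ = ∑ a ∈ Finset.Icc 1 N, (idealsUpTo k (N / a ^ (k + 1))).ncard := by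
        rw [← finsum_one, scaledPairs_eq_biUnion]
        simpa only [one_mul] using!
          finsum_mem_biUnion_image_prodMk (fun a _ => finite_idealsUpTo k _) fun _ => 1

theorem ncard_idealsUpTo_succ (k N : ℕ) :
    (idealsUpTo (k + 1) N).ncard =
      ∑ a ∈ Finset.Icc 1 N, a ^ (k + 1) * (idealsUpTo k (N / a ^ (k + 1))).ncard := by
  have hdisj : (latticesUpTo (k + 1) N).PairwiseDisjoint (idealsWithTruncation (k + 1)) :=
    fun T _ T' _ hne => Set.disjoint_left.2 fun J hJ hJ' => hne (hJ.2.symm.trans hJ'.2)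
  calc (idealsUpTo (k + 1) N).ncard
      = ∑ᶠ T ∈ latticesUpTo (k + 1) N, (idealsWithTruncation (k + 1) T).ncard := by
        rw [idealsUpTo_eq_biUnion]
        exact (finite_latticesUpTo _ N).ncard_biUnion
          (fun T hT => finite_idealsWithTruncation hT) hdisj
    _ = ∑ᶠ p ∈ scaledPairs k N, p.1 ^ (k + 1) :=
        (finsum_mem_eq_of_bijOn _ (scaledTruncation_bijOn k N) fun p hp =>
          (ncard_idealsWithTruncation_scaledTruncation hp).symm).symm
    _ = ∑ a ∈ Finset.Icc 1 N, a ^ (k + 1) * (idealsUpTo k (N / a ^ (k + 1))).ncard := by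
        rw [scaledPairs_eq_biUnion]
        exact finsum_mem_biUnion_image_prodMk (fun a _ => finite_idealsUpTo k _) (· ^ (k + 1))

theorem ncard_idealsUpTo_zero_right (k : ℕ) : (idealsUpTo k 0).ncard = 0 := by
  simp [idealsUpTo]

theorem ncard_idealsUpTo_zero_left (hN : N ≠ 0) : (idealsUpTo 0 N).ncard = 1 := by
  have htop : idealsUpTo 0 N = {⊤} := by
    ext J
    rw [Set.mem_singleton_iff, ← containsMonic_zero_iff]
    refine ⟨And.left, fun hJ => ⟨hJ, ?_⟩⟩
    rw [containsMonic_zero_iff.1 hJ, Submodule.cardQuot_top, Finset.mem_Icc]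
    exact ⟨le_rfl, Nat.one_le_iff_ne_zero.2 hN⟩
  rw [htop, Set.ncard_singleton]

theorem ncard_idealsUpTo_one (N : ℕ) : (idealsUpTo 1 N).ncard = ∑ a ∈ Finset.Icc 1 N, a := by
  rw [ncard_idealsUpTo_succ]
  refine Finset.sum_congr rfl fun a ha => ?_
  obtain ⟨hpos, hle⟩ := Finset.mem_Icc.1 ha
  rw [zero_add, pow_one, ncard_idealsUpTo_zero_left (Nat.div_pos hle hpos).ne', mul_one]

end Counting

section Coordinates

variable {d : ℕ} {Λ : AddSubgroup (Fin d → ℤ)}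

/-- The bijection between subgroups of `ℤ^d` and submodules of the polynomials of degree less than
`d` induced by `v ↦ ∑ i, v i * X ^ i`. -/
noncomputable def latticeEquiv (d : ℕ) :
    AddSubgroup (Fin d → ℤ) ≃ Submodule ℤ (degreeLT ℤ d) :=
  (AddSubgroup.toIntSubmodule.trans
    (Submodule.orderIsoMapComap (degreeLTEquiv ℤ d).symm)).toEquiv

theorem degreeLTEquiv_symm_mem_latticeEquiv (v : Fin d → ℤ) :
    (degreeLTEquiv ℤ d).symm v ∈ latticeEquiv d Λ ↔ v ∈ Λ :=
  (degreeLTEquiv ℤ d).symm.injective.mem_set_image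

theorem coe_degreeLTEquiv_symm {R : Type*} [CommRing R] (v : Fin d → R) :
    ((degreeLTEquiv R d).symm v : R[X]) = ∑ i : Fin d, C (v i) * X ^ (i : ℕ) := by
  simp only [C_mul_X_pow_eq_monomial]
  rfl

theorem cardQuot_latticeEquiv (Λ : AddSubgroup (Fin d → ℤ)) :
    (latticeEquiv d Λ).cardQuot = Λ.index :=
  AddSubgroup.index_map_equiv Λ (degreeLTEquiv ℤ d).symm.toAddEquiv

theorem latticeEquiv_eq_truncation_iff {J : Ideal ℤ[X]} :
    latticeEquiv d Λ = truncation d J ↔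
      ∀ v : Fin d → ℤ, v ∈ Λ ↔ ∑ i : Fin d, C (v i) * X ^ (i : ℕ) ∈ J := by
  simp only [SetLike.ext_iff, (degreeLTEquiv ℤ d).symm.surjective.forall,
    degreeLTEquiv_symm_mem_latticeEquiv, mem_truncation, coe_degreeLTEquiv_symm]

theorem isIdealLattice_iff :
    IsIdealLattice d Λ ↔ (idealsWithTruncation d (latticeEquiv d Λ)).Nonempty := by
  constructor
  · rintro ⟨f, hf, hd, I, hI⟩
    refine ⟨I.comap (Ideal.Quotient.mk _), ⟨f, ?_, hf, hd⟩,
      (latticeEquiv_eq_truncation_iff.2 hI).symm⟩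
    rw [Ideal.mem_comap, Ideal.Quotient.eq_zero_iff_mem.2 (Ideal.mem_span_singleton_self f)]
    exact I.zero_mem
  · rintro ⟨J, ⟨f, hfJ, hf, hd⟩, hJ⟩
    refine ⟨f, hf, hd, J.map (Ideal.Quotient.mk _), fun v => ?_⟩
    rw [← Ideal.mem_comap, Ideal.comap_map_mk ((Ideal.span_singleton_le_iff_mem J).2 hfJ)]
    exact latticeEquiv_eq_truncation_iff.1 hJ.symm v

theorem sum_card_isIdealLattice (d N : ℕ) :
    ∑ n ∈ Finset.Icc 1 N,
      Nat.card {Λ : AddSubgroup (Fin d → ℤ) // Λ.index = n ∧ IsIdealLattice d Λ} =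
    (latticesUpTo d N).ncard := by
  let latticesOfIndex (n : ℕ) : Set (Submodule ℤ (degreeLT ℤ d)) :=
    {T | T.cardQuot = n ∧ (idealsWithTruncation d T).Nonempty}
  have hcard (n : ℕ) :
      Nat.card {Λ : AddSubgroup (Fin d → ℤ) // Λ.index = n ∧ IsIdealLattice d Λ} =
        (latticesOfIndex n).ncard :=
    Nat.card_congr ((latticeEquiv d).subtypeEquiv fun Λ => by
      rw [isIdealLattice_iff, ← cardQuot_latticeEquiv]; rfl)
  have hunion : latticesUpTo d N = ⋃ n ∈ Finset.Icc 1 N, latticesOfIndex n := by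
    ext T
    rw [Set.mem_iUnion₂]
    exact ⟨fun hT => ⟨_, hT.2, rfl, hT.1⟩, fun ⟨_, hn, hTn, hT⟩ => ⟨hT, hTn ▸ hn⟩⟩
  have hfin (n : ℕ) (hn : n ∈ Finset.Icc 1 N) : (latticesOfIndex n).Finite :=
    (finite_latticesUpTo d N).subset (hunion ▸ Set.subset_biUnion_of_mem (u := latticesOfIndex) hn)
  have hdisj : (Finset.Icc 1 N : Set ℕ).PairwiseDisjoint latticesOfIndex :=
    fun m _ n _ hne => Set.disjoint_left.2 fun T hm hn => hne (hm.1.symm.trans hn.1)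
  calc ∑ n ∈ Finset.Icc 1 N,
        Nat.card {Λ : AddSubgroup (Fin d → ℤ) // Λ.index = n ∧ IsIdealLattice d Λ}
      = ∑ n ∈ Finset.Icc 1 N, (latticesOfIndex n).ncard :=
        Finset.sum_congr rfl fun n _ => hcard n
    _ = ∑ᶠ n ∈ (Finset.Icc 1 N : Set ℕ), (latticesOfIndex n).ncard :=
        (finsum_mem_coe_finset _ _).symm
    _ = (latticesUpTo d N).ncard := by
        rw [hunion]
        exact ((Finset.finite_toSet _).ncard_biUnion hfin hdisj).symm

end Coordinates

/-! ### Asymptotics -/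

section Asymptotics

variable {𝕜 : Type*} [RCLike 𝕜] {S w : ℕ → 𝕜} {L : 𝕜} {r : ℕ}

theorem tendsto_natCast_natDiv_div (m : ℕ) :
    Tendsto (fun N : ℕ => ((N / m : ℕ) : 𝕜) / N) atTop (𝓝 (m : 𝕜)⁻¹) := by
  have hreal : Tendsto (fun N : ℕ => ((N / m : ℕ) : ℝ) / N) atTop (𝓝 (m : ℝ)⁻¹) := by
    have hfloor := (tendsto_nat_floor_mul_div_atTop (R := ℝ) (a := (m : ℝ)⁻¹)
      (by positivity)).comp tendsto_natCast_atTop_atTop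
    refine hfloor.congr fun N => ?_
    rw [Function.comp_apply, ← div_eq_inv_mul, Nat.floor_div_eq_div]
  simpa [Function.comp_def] using
    (RCLike.continuous_ofReal (K := 𝕜)).continuousAt.tendsto.comp hreal

theorem tendsto_comp_natDiv_div_pow (hS : Tendsto (fun N : ℕ => S N / N ^ r) atTop (𝓝 L))
    {m : ℕ} (hm : m ≠ 0) :
    Tendsto (fun N : ℕ => S (N / m) / N ^ r) atTop (𝓝 (L / m ^ r)) := by
  have hdiv : Tendsto (fun N : ℕ => N / m) atTop atTop := Nat.tendsto_div_const_atTop hm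
  have hprod := (hS.comp hdiv).mul ((tendsto_natCast_natDiv_div (𝕜 := 𝕜) m).pow r)
  rw [inv_pow, ← div_eq_mul_inv] at hprod
  refine hprod.congr' ?_
  filter_upwards [hdiv.eventually_ge_atTop 1] with N hN
  have hcast : ((N / m : ℕ) : 𝕜) ^ r ≠ 0 :=
    pow_ne_zero _ (Nat.cast_ne_zero.2 (Nat.one_le_iff_ne_zero.1 hN))
  rw [Function.comp_apply, div_pow, div_mul_div_cancel₀ hcast]

theorem exists_norm_le_mul_pow (hS0 : S 0 = 0)
    (hS : Tendsto (fun N : ℕ => S N / N ^ r) atTop (𝓝 L)) :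
    ∃ B : ℝ, 0 ≤ B ∧ ∀ n : ℕ, ‖S n‖ ≤ B * (n : ℝ) ^ r := by
  obtain ⟨B, hB⟩ := (Metric.isBounded_range_of_tendsto _ hS).exists_norm_le
  have hB0 : 0 ≤ B := (norm_nonneg _).trans (hB _ ⟨0, rfl⟩)
  refine ⟨B, hB0, fun n => ?_⟩
  rcases eq_or_ne n 0 with rfl | hn
  · rw [hS0, norm_zero]
    positivity
  · have hquot : ‖S n / (n : 𝕜) ^ r‖ ≤ B := hB _ ⟨n, rfl⟩
    rwa [norm_div, norm_pow, RCLike.norm_natCast, div_le_iff₀ (by positivity)] at hquot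

theorem norm_comp_natDiv_div_pow_le {B : ℝ} (hB0 : 0 ≤ B)
    (hB : ∀ n : ℕ, ‖S n‖ ≤ B * (n : ℝ) ^ r) (m N : ℕ) :
    ‖S (N / m) / N ^ r‖ ≤ B / (m : ℝ) ^ r := by
  rw [norm_div, norm_pow, RCLike.norm_natCast]
  refine div_le_of_le_mul₀ (by positivity) (by positivity) ?_
  calc ‖S (N / m)‖ ≤ B * ((N / m : ℕ) : ℝ) ^ r := hB _
    _ ≤ B * ((N : ℝ) / m) ^ r := by gcongr; exact Nat.cast_div_le
    _ = B / (m : ℝ) ^ r * (N : ℝ) ^ r := by rw [div_pow]; ring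

theorem sum_Icc_mul_comp_natDiv_pow (hS0 : S 0 = 0) (w : ℕ → 𝕜) {k : ℕ} (hk : k ≠ 0) (N : ℕ) :
    ∑ a ∈ Finset.Icc 1 N, w a * S (N / a ^ k) = ∑' a, w a * S (N / a ^ k) := by
  refine (tsum_eq_sum fun a ha => ?_).symm
  suffices hdiv : N / a ^ k = 0 by rw [hdiv, hS0, mul_zero]
  rcases Nat.eq_zero_or_pos a with rfl | hpos
  · rw [zero_pow hk, Nat.div_zero]
  · have hlt : N < a := not_le.1 fun hle => ha (Finset.mem_Icc.2 ⟨hpos, hle⟩)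
    exact Nat.div_eq_of_lt (hlt.trans_le (Nat.le_self_pow hk a))

theorem tendsto_sum_mul_comp_natDiv_pow {k : ℕ} (hk : k ≠ 0) (hr : r ≠ 0) (hS0 : S 0 = 0)
    (hw : Summable fun a : ℕ => ‖w a‖ / ((a ^ k : ℕ) : ℝ) ^ r)
    (hS : Tendsto (fun N : ℕ => S N / N ^ r) atTop (𝓝 L)) :
    Tendsto (fun N : ℕ => (∑ a ∈ Finset.Icc 1 N, w a * S (N / a ^ k)) / (N : 𝕜) ^ r) atTop
      (𝓝 ((∑' a : ℕ, w a / ((a ^ k : ℕ) : 𝕜) ^ r) * L)) := by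
  obtain ⟨B, hB0, hB⟩ := exists_norm_le_mul_pow hS0 hS
  simp_rw [sum_Icc_mul_comp_natDiv_pow hS0 w hk, ← tsum_div_const, ← tsum_mul_right, mul_div_assoc]
  refine tendsto_tsum_of_dominated_convergence
    (bound := fun a => ‖w a‖ / ((a ^ k : ℕ) : ℝ) ^ r * B) (hw.mul_right B) (fun a => ?_)
    (Eventually.of_forall fun N a => ?_)
  · rw [div_mul_eq_mul_div, mul_div_assoc]
    rcases eq_or_ne a 0 with rfl | ha
    · simp [hk, hr, hS0]
    · exact (tendsto_comp_natDiv_div_pow hS (pow_ne_zero k ha)).const_mul (w a)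
  · rw [norm_mul, div_mul_eq_mul_div, mul_div_assoc]
    exact mul_le_mul_of_nonneg_left (norm_comp_natDiv_div_pow_le hB0 hB _ N) (norm_nonneg _)

end Asymptotics

section Zeta

variable {S : ℕ → ℂ} {L : ℂ} {j k r s : ℕ}

theorem tendsto_sum_pow_mul_comp_natDiv_pow (hs : 1 < s) (hjs : j + s = k * r) (hS0 : S 0 = 0)
    (hS : Tendsto (fun N : ℕ => S N / N ^ r) atTop (𝓝 L)) :
    Tendsto (fun N : ℕ => (∑ a ∈ Finset.Icc 1 N, (a : ℂ) ^ j * S (N / a ^ k)) / (N : ℂ) ^ r)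
      atTop (𝓝 (riemannZeta s * L)) := by
  obtain ⟨hk, hr⟩ : k ≠ 0 ∧ r ≠ 0 := mul_ne_zero_iff.1 (by omega)
  have hterm (a : ℕ) : (a : ℂ) ^ j / ((a ^ k : ℕ) : ℂ) ^ r = 1 / (a : ℂ) ^ s := by
    rw [Nat.cast_pow, ← pow_mul, ← hjs]
    rcases eq_or_ne a 0 with rfl | ha
    · simp [show s ≠ 0 by omega]
    · rw [pow_add, div_mul_cancel_left₀ (pow_ne_zero j (Nat.cast_ne_zero.2 ha)), one_div]
  have hsummable : Summable fun a : ℕ => ‖(a : ℂ) ^ j‖ / ((a ^ k : ℕ) : ℝ) ^ r := by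
    refine (Real.summable_one_div_nat_pow.2 hs).congr fun a => ?_
    simpa using (congrArg norm (hterm a)).symm
  rw [zeta_nat_eq_tsum_of_gt_one hs, ← tsum_congr hterm]
  exact tendsto_sum_mul_comp_natDiv_pow hk hr hS0 hsummable hS

theorem tendsto_sum_Icc_id_div_sq :
    Tendsto (fun N : ℕ => ((∑ a ∈ Finset.Icc 1 N, a : ℕ) : ℂ) / (N : ℂ) ^ 2) atTop
      (𝓝 (1 / 2)) := by
  have hlim : Tendsto (fun N : ℕ => 1 / 2 + 1 / 2 * (N : ℂ)⁻¹) atTop (𝓝 (1 / 2)) := by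
    simpa using
      ((tendsto_inv_atTop_nhds_zero_nat (𝕜 := ℂ)).const_mul (1 / 2 : ℂ)).const_add (1 / 2 : ℂ)
  refine hlim.congr' ?_
  filter_upwards [eventually_ne_atTop 0] with N hN
  have hgauss : ((∑ a ∈ Finset.Icc 1 N, a : ℕ) : ℂ) * 2 = (N + 1) * N := by
    have h := Finset.sum_range_id_mul_two (N + 1)
    rw [Finset.sum_range_eq_add_Ico _ N.succ_pos, zero_add, Nat.add_sub_cancel] at h
    exact_mod_cast h
  have hN' : (N : ℂ) ≠ 0 := Nat.cast_ne_zero.2 hN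
  field_simp
  linear_combination -hgauss

theorem tendsto_ncard_idealsUpTo (k : ℕ) :
    Tendsto (fun N : ℕ => ((idealsUpTo (k + 1) N).ncard : ℂ) / (N : ℂ) ^ 2) atTop
      (𝓝 (1 / 2 * ∏ i ∈ Finset.Icc 2 (k + 1), riemannZeta i)) := by
  induction k with
  | zero => simpa [ncard_idealsUpTo_one] using tendsto_sum_Icc_id_div_sq
  | succ k ih =>
    have hstep := tendsto_sum_pow_mul_comp_natDiv_pow (j := k + 2) (k := k + 2) (s := k + 2)
      (by omega) (mul_two _).symm (by simp [ncard_idealsUpTo_zero_right]) ih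
    rw [mul_comm, mul_assoc, ← Finset.prod_Icc_succ_top (by omega)] at hstep
    refine hstep.congr fun N => ?_
    rw [ncard_idealsUpTo_succ]
    push_cast
    rfl

theorem tendsto_ncard_latticesUpTo (k : ℕ) :
    Tendsto (fun N : ℕ => ((latticesUpTo (k + 2) N).ncard : ℂ) / (N : ℂ) ^ 2) atTop
      (𝓝 (1 / 2 * (∏ i ∈ Finset.Icc 2 (k + 1), riemannZeta i) *
        riemannZeta (2 * (k + 2) : ℕ))) := by
  have hstep := tendsto_sum_pow_mul_comp_natDiv_pow (j := 0) (k := k + 2) (s := 2 * (k + 2))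
    (by omega) (by omega) (by simp [ncard_idealsUpTo_zero_right]) (tendsto_ncard_idealsUpTo k)
  rw [mul_comm] at hstep
  refine hstep.congr fun N => ?_
  simp [ncard_latticesUpTo_succ]

end Zeta

/-- Corollary 3.3: for `d ≥ 2` the number of ideal lattices in `ℤ^d` of index at most `N`
is asymptotic to `c·N²` with `c = (∏_{i=2}^{d-1} ζ(i))·ζ(2d)/2`. -/
theorem ideal_lattice_count_asymptotic (d : ℕ) (hd : 2 ≤ d) :
    Tendsto (fun N : ℕ =>
        (((∑ n ∈ Finset.Icc 1 N,
            (Nat.card {Λ : AddSubgroup (Fin d → ℤ) //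
              Λ.index = n ∧ IsIdealLattice d Λ} : ℝ)) / (N : ℝ) ^ 2 : ℝ) : ℂ))
      atTop
      (𝓝 ((1 / 2) * (∏ i ∈ Finset.Icc 2 (d - 1), riemannZeta (i : ℂ)) *
        riemannZeta ((2 * d : ℕ) : ℂ))) := by
  obtain ⟨k, rfl⟩ : ∃ k, d = k + 2 := ⟨d - 2, by omega⟩
  refine (tendsto_ncard_latticesUpTo k).congr fun N => ?_
  rw [← sum_card_isIdealLattice]
  push_cast
  rfl
end

section
/- For every positive integer n, the number of ideals I of ℤ[X] with |ℤ[X]/I| = n equals n times the number of finitely supported sequences (b_i)_{i≥1} of positive integers (meaning b_i = 1 for all but finitely many i) such that ∏_{i≥1} b_i^i = n. -/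
/-!
Let `R` be an infinite principal ideal domain and write `N(𝔞) = |R / 𝔞|`. For an ideal `J` of `R[X]`
of finite index let `c_k` be the ideal of coefficients of `X ^ k` in the elements of `J` of degree
at most `k`. These ideals increase with `k` and are eventually `⊤`, so `c_{i-1} = 𝔟_i c_i` for a
unique finitely supported sequence of ideals `𝔟_i`, the jumps of `J`. Every finitely supported
sequence `𝔟` of ideals of finite index is the sequence of jumps of exactly `∏ N(𝔟_i) ^ i` ideals,
and each of them has index `∏ N(𝔟_i) ^ i`.

Both facts follow by splitting off the last jump. If `J` contains a monic `f` of degree `m + 1` and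
`c_m = (b)`, then all coefficients of the elements of `J` of degree at most `m` are divisible by
`b`, so that `J = bI + (f)` with `I = (J : b)`, and `I` has the same jumps as `J` except for the
last one. Conversely, let `M` consist of the elements of `I` of degree at most `m`. The index of
`bI + (f)` in `I` is `|M / bM| = N(b) ^ (m + 1)`, and since `bI + (f)` determines `f` exactly modulo
`bM`, this is also the number of ideals `bI + (f)` for given `b` and `I`.
-/

open Polynomial Finset
open scoped Pointwise

namespace PolynomialIdealCount

/-! ### Leading coefficient ideals -/

section LeadingCoeff

variable {R : Type*} [CommRing R] {I J : Ideal R[X]} {f p : R[X]} {m : ℕ}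

lemma mem_degreeLE_iff : p ∈ I.degreeLE m ↔ p ∈ I ∧ p.degree ≤ m := by
  rw [Ideal.degreeLE, Submodule.mem_inf, mem_degreeLE, Ideal.mem_ofPolynomial, and_comm]

lemma mem_leadingCoeffNth_iff_coeff {x : R} :
    x ∈ I.leadingCoeffNth m ↔ ∃ p ∈ I.degreeLE m, p.coeff m = x :=
  Submodule.mem_map

lemma leadingCoeffNth_eq_top_of_monic_mem (hf : f.Monic) (hfI : f ∈ I) :
    I.leadingCoeffNth f.natDegree = ⊤ :=
  (Ideal.eq_top_iff_one _).2 <|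
    (I.mem_leadingCoeffNth _ _).2 ⟨f, hfI, degree_le_natDegree, hf⟩

lemma exists_monic_mem_of_leadingCoeffNth_eq_top [Nontrivial R] (h : I.leadingCoeffNth m = ⊤) :
    ∃ f ∈ I, f.Monic ∧ f.natDegree = m := by
  obtain ⟨f, hf, hfm⟩ := mem_leadingCoeffNth_iff_coeff.1 ((Ideal.eq_top_iff_one _).1 h)
  obtain ⟨hfI, hdeg⟩ := mem_degreeLE_iff.1 hf
  have hfdeg : f.natDegree = m := natDegree_eq_of_degree_eq_some <|
    hdeg.antisymm (le_degree_of_ne_zero (hfm ▸ one_ne_zero))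
  exact ⟨f, hfI, by rw [Monic, leadingCoeff, hfdeg, hfm], hfdeg⟩

lemma leadingCoeffNth_eq_top_of_X_pow_sub_X_pow_mem {i j : ℕ} (hij : i < j)
    (h : (X ^ j - X ^ i : R[X]) ∈ J) : J.leadingCoeffNth j = ⊤ := by
  refine (Ideal.eq_top_iff_one _).2 (mem_leadingCoeffNth_iff_coeff.2
    ⟨X ^ j - X ^ i, mem_degreeLE_iff.2 ⟨h, ?_⟩, ?_⟩)
  · exact (degree_sub_le _ _).trans
      (max_le (degree_X_pow_le j) ((degree_X_pow_le i).trans (Nat.cast_le.2 hij.le)))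
  · rw [coeff_sub, coeff_X_pow_self, coeff_X_pow, if_neg hij.ne', sub_zero]

lemma leadingCoeffNth_card_quotient_eq_top [Finite (R[X] ⧸ J)] :
    J.leadingCoeffNth (Nat.card (R[X] ⧸ J)) = ⊤ := by
  have := Fintype.ofFinite (R[X] ⧸ J)
  obtain ⟨i, j, hne, hij⟩ := Fintype.exists_ne_map_eq_of_card_lt
    (fun i : Fin (Nat.card (R[X] ⧸ J) + 1) => Ideal.Quotient.mk J (X ^ (i : ℕ)))
    (by rw [Fintype.card_fin, Nat.card_eq_fintype_card]; exact Nat.lt_succ_self _)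
  wlog hlt : i < j generalizing i j
  · exact this j i hne.symm hij.symm (hne.symm.lt_of_le (not_lt.1 hlt))
  have htop : J.leadingCoeffNth j = ⊤ := leadingCoeffNth_eq_top_of_X_pow_sub_X_pow_mem hlt
    ((Ideal.Quotient.mk_eq_mk_iff_sub_mem _ _).1 hij.symm)
  exact top_le_iff.1 (htop ▸ J.leadingCoeffNth_mono (Nat.lt_succ_iff.1 j.2))

lemma leadingCoeffNth_zero_ne_bot [Infinite R] [Finite (R[X] ⧸ J)] : J.leadingCoeffNth 0 ≠ ⊥ := by
  obtain ⟨x, y, hne, hxy⟩ :=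
    Finite.exists_ne_map_eq_of_infinite fun x : R => Ideal.Quotient.mk J (C x)
  refine (Submodule.ne_bot_iff _).2 ⟨x - y, ?_, sub_ne_zero.2 hne⟩
  rw [Ideal.mem_leadingCoeffNth_zero, C_sub]
  exact (Ideal.Quotient.mk_eq_mk_iff_sub_mem _ _).1 hxy

lemma X_mul_sub_C_mul_mem_degreeLE (hf : f.Monic) (hfJ : f ∈ J) (hfm : f.natDegree = m + 1)
    (hp : p ∈ J.degreeLE m) : X * p - C (p.coeff m) * f ∈ J.degreeLE m := by
  obtain ⟨hpJ, hpdeg⟩ := mem_degreeLE_iff.1 hp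
  refine mem_degreeLE_iff.2 ⟨sub_mem (J.mul_mem_left _ hpJ) (J.mul_mem_left _ hfJ), ?_⟩
  refine (degree_le_iff_coeff_zero _ _).2 fun i hi => ?_
  obtain ⟨k, rfl⟩ := Nat.exists_eq_succ_of_ne_zero (Nat.ne_zero_of_lt (Nat.cast_lt.1 hi))
  rw [coeff_sub, coeff_X_mul, coeff_C_mul]
  rcases (Nat.lt_succ_iff.1 (Nat.cast_lt.1 hi)).eq_or_lt with rfl | hk
  · rw [show f.coeff (m + 1) = 1 from hfm ▸ hf.coeff_natDegree, mul_one, sub_self]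
  · have hpk : p.coeff k = 0 := coeff_eq_zero_of_degree_lt (hpdeg.trans_lt (Nat.cast_lt.2 hk))
    have hfk : f.coeff (k + 1) = 0 := coeff_eq_zero_of_natDegree_lt (by omega)
    rw [hpk, hfk, mul_zero, sub_zero]

/- The coefficients of `X * p - C (p.coeff m) * f` are those of `p` shifted by one, up to multiples
of `p.coeff m`; iterating the shift moves every coefficient of `p` to the top. -/
lemma coeff_mem_leadingCoeffNth (hf : f.Monic) (hfJ : f ∈ J) (hfm : f.natDegree = m + 1)
    (hp : p ∈ J.degreeLE m) (i : ℕ) : p.coeff i ∈ J.leadingCoeffNth m := by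
  suffices h : ∀ j ≤ m, ∀ p ∈ J.degreeLE m, p.coeff (m - j) ∈ J.leadingCoeffNth m by
    rcases le_or_gt i m with hi | hi
    · simpa only [Nat.sub_sub_self hi] using h (m - i) (Nat.sub_le m i) p hp
    · rw [coeff_eq_zero_of_degree_lt ((mem_degreeLE_iff.1 hp).2.trans_lt (Nat.cast_lt.2 hi))]
      exact zero_mem _
  intro j
  induction j with
  | zero => exact fun _ p hp => mem_leadingCoeffNth_iff_coeff.2 ⟨p, hp, rfl⟩
  | succ j ih =>
    intro hj p hp
    have htop : p.coeff m ∈ J.leadingCoeffNth m := mem_leadingCoeffNth_iff_coeff.2 ⟨p, hp, rfl⟩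
    have hshift := ih (Nat.le_of_succ_le hj) _ (X_mul_sub_C_mul_mem_degreeLE hf hfJ hfm hp)
    rw [show m - j = m - (j + 1) + 1 by omega, coeff_sub, coeff_X_mul, coeff_C_mul] at hshift
    exact ((J.leadingCoeffNth m).sub_mem_iff_left (Ideal.mul_mem_right _ _ htop)).1 hshift

end LeadingCoeff

/-! ### The ideals `bI + (f)` -/

section SMulAdjoin

variable {R : Type*} [CommRing R] {I J : Ideal R[X]} {f g p : R[X]} {b : R} {m : ℕ}

lemma modByMonic_mem_iff (hfI : f ∈ I) : p %ₘ f ∈ I ↔ p ∈ I := by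
  conv_rhs => rw [← modByMonic_add_div p f]
  exact (I.add_mem_iff_left (I.mul_mem_right _ hfI)).symm

lemma degree_le_iff_degree_lt_of_natDegree_eq_succ (hfm : f.natDegree = m + 1) :
    p.degree ≤ m ↔ p.degree < f.degree := by
  rw [(degree_eq_iff_natDegree_eq_of_pos m.succ_pos).2 hfm, ← mem_degreeLE, ← mem_degreeLT,
    degreeLT_succ_eq_degreeLE]

/-- The ideal `bI + (f)`. For `f ∈ I` monic of degree `m + 1`, passing from `I` to this ideal adds
a last jump `(b)` at `m + 1`. -/
noncomputable def smulAdjoin (b : R) (I : Ideal R[X]) (f : R[X]) : Ideal R[X] :=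
  Ideal.span {f} ⊔ b • I

lemma self_mem_smulAdjoin : f ∈ smulAdjoin b I f :=
  Ideal.mem_sup_left (Ideal.mem_span_singleton_self f)

lemma smul_le_smulAdjoin : b • I ≤ smulAdjoin b I f := le_sup_right

lemma smulAdjoin_le (hfI : f ∈ I) : smulAdjoin b I f ≤ I := by
  refine sup_le ((Ideal.span_singleton_le_iff_mem _).2 hfI) ?_
  rintro _ ⟨p, hp, rfl⟩
  exact I.smul_of_tower_mem b hp

lemma mem_smulAdjoin_iff (hf : f.Monic) (hfI : f ∈ I) :
    p ∈ smulAdjoin b I f ↔ p %ₘ f ∈ b • I := by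
  refine ⟨fun hp => ?_,
    fun hp => (modByMonic_mem_iff self_mem_smulAdjoin).1 (smul_le_smulAdjoin hp)⟩
  obtain ⟨q, w, ⟨r, hr, rfl⟩, rfl⟩ := Ideal.mem_span_singleton_sup.1 hp
  rw [add_modByMonic, mul_self_modByMonic hf, zero_add, DistribSMul.toLinearMap_apply,
    smul_modByMonic]
  exact Submodule.smul_mem_pointwise_smul _ _ _ ((modByMonic_mem_iff hfI).2 hr)

lemma mem_smulAdjoin_iff_of_degree_lt (hf : f.Monic) (hfI : f ∈ I) (hp : p.degree < f.degree) :
    p ∈ smulAdjoin b I f ↔ p ∈ b • I := by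
  nontriviality R
  rw [mem_smulAdjoin_iff hf hfI, (modByMonic_eq_self_iff hf).2 hp]

lemma smulAdjoin_le_smulAdjoin_of_sub_mem (h : f - g ∈ b • I) :
    smulAdjoin b I f ≤ smulAdjoin b I g := by
  refine sup_le ((Ideal.span_singleton_le_iff_mem _).2 ?_) smul_le_smulAdjoin
  rw [← sub_add_cancel f g]
  exact add_mem (smul_le_smulAdjoin h) self_mem_smulAdjoin

lemma smulAdjoin_eq_smulAdjoin_iff (hf : f.Monic) (hg : g.Monic) (hgI : g ∈ I)
    (hdeg : f.degree = g.degree) :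
    smulAdjoin b I f = smulAdjoin b I g ↔ f - g ∈ b • I := by
  nontriviality R
  refine ⟨fun h => ?_, fun h => (smulAdjoin_le_smulAdjoin_of_sub_mem h).antisymm <|
    smulAdjoin_le_smulAdjoin_of_sub_mem (neg_sub f g ▸ neg_mem h)⟩
  have hlt : (f - g).degree < g.degree :=
    hdeg ▸ degree_sub_lt_left hdeg hf.ne_zero (hf.trans hg.symm)
  rw [← mem_smulAdjoin_iff_of_degree_lt hg hgI hlt]
  exact sub_mem (h ▸ self_mem_smulAdjoin) self_mem_smulAdjoin

lemma degreeLE_sup_smulAdjoin (hf : f.Monic) (hfI : f ∈ I) (hfm : f.natDegree = m + 1) :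
    (I.degreeLE m).toAddSubgroup ⊔ Submodule.toAddSubgroup (smulAdjoin b I f) =
      Submodule.toAddSubgroup I := by
  nontriviality R
  refine le_antisymm (sup_le (fun p hp => (mem_degreeLE_iff.1 hp).1) (smulAdjoin_le hfI))
    fun p hp => ?_
  rw [← modByMonic_add_div p f]
  refine AddSubgroup.add_mem_sup (mem_degreeLE_iff.2 ⟨(modByMonic_mem_iff hfI).2 hp, ?_⟩)
    (Ideal.mul_mem_right _ _ self_mem_smulAdjoin)
  exact (degree_le_iff_degree_lt_of_natDegree_eq_succ hfm).2 (degree_modByMonic_lt _ hf)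

lemma exists_eq_smulAdjoin (hf : f.Monic) (hfJ : f ∈ J) (hfm : f.natDegree = m + 1)
    (hb : J.leadingCoeffNth m = Ideal.span {b}) : ∃ I, f ∈ I ∧ J = smulAdjoin b I f := by
  nontriviality R
  let I : Ideal R[X] := Submodule.comap (LinearMap.lsmul R[X] R[X] (C b)) J
  have mem_I (p : R[X]) : p ∈ I ↔ b • p ∈ J := by
    rw [smul_eq_C_mul]
    rfl
  have hfI : f ∈ I := (mem_I f).2 (J.smul_of_tower_mem b hfJ)
  refine ⟨I, hfI, le_antisymm (fun p hp => (mem_smulAdjoin_iff hf hfI).2 ?_) ?_⟩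
  · have hmod : p %ₘ f ∈ J := (modByMonic_mem_iff hfJ).2 hp
    have hdvd : C b ∣ p %ₘ f := (C_dvd_iff_dvd_coeff _ _).2 fun i => by
      rw [← Ideal.mem_span_singleton, ← hb]
      refine coeff_mem_leadingCoeffNth hf hfJ hfm (mem_degreeLE_iff.2 ⟨hmod, ?_⟩) i
      exact (degree_le_iff_degree_lt_of_natDegree_eq_succ hfm).2 (degree_modByMonic_lt _ hf)
    obtain ⟨r, hr⟩ := hdvd
    rw [← smul_eq_C_mul] at hr
    rw [hr]
    exact Submodule.smul_mem_pointwise_smul _ _ _ ((mem_I r).2 (hr ▸ hmod))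
  · refine sup_le ((Ideal.span_singleton_le_iff_mem _).2 hfJ) ?_
    rintro _ ⟨r, hr, rfl⟩
    exact (mem_I r).1 hr

/-- The set of all ideals `bI + (f)` with `f ∈ I` monic of degree `d`, that is, of the ideals that
arise from `I` by adding a last jump `(b)` at `d`. -/
def monicAdjunctions (b : R) (I : Ideal R[X]) (d : ℕ) : Set (Ideal R[X]) :=
  {J | ∃ f ∈ I, f.Monic ∧ f.natDegree = d ∧ smulAdjoin b I f = J}

lemma mem_and_monic_and_natDegree_eq_iff (hf : f.Monic) (hfI : f ∈ I) (hfm : f.natDegree = m + 1) :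
    (g ∈ I ∧ g.Monic ∧ g.natDegree = m + 1) ↔ g - f ∈ I.degreeLE m := by
  have : Nontrivial R := .of_polynomial_ne (ne_zero_of_natDegree_gt (n := m) (by omega) : f ≠ 0)
  rw [mem_degreeLE_iff, I.sub_mem_iff_left hfI, degree_le_iff_degree_lt_of_natDegree_eq_succ hfm,
    and_congr_right_iff]
  refine fun _ => ⟨fun ⟨hg, hgm⟩ => ?_, fun hlt => ?_⟩
  · have hdeg : g.degree = f.degree := by
      rw [degree_eq_natDegree hg.ne_zero, degree_eq_natDegree hf.ne_zero, hgm, hfm]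
    exact hdeg ▸ degree_sub_lt_left hdeg hg.ne_zero (hg.trans hf.symm)
  · rw [← add_sub_cancel f g]
    exact ⟨hf.add_of_left hlt, (natDegree_add_eq_left_of_degree_lt hlt).trans hfm⟩

lemma range_smulAdjoin_add (hf : f.Monic) (hfI : f ∈ I) (hfm : f.natDegree = m + 1) :
    Set.range (fun r : (I.degreeLE m).toAddSubgroup => smulAdjoin b I (f + r)) =
      monicAdjunctions b I (m + 1) := by
  ext J
  simp only [Set.mem_range, Subtype.exists, monicAdjunctions, Set.mem_ofPred_eq]
  constructor
  · rintro ⟨r, hr, rfl⟩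
    obtain ⟨hI, hmonic, hdeg⟩ := (mem_and_monic_and_natDegree_eq_iff hf hfI hfm).2
      ((add_sub_cancel_left f r).symm ▸ hr : f + r - f ∈ I.degreeLE m)
    exact ⟨f + r, hI, hmonic, hdeg, rfl⟩
  · rintro ⟨g, hgI, hg, hgm, rfl⟩
    exact ⟨g - f, (mem_and_monic_and_natDegree_eq_iff hf hfI hfm).1 ⟨hgI, hg, hgm⟩,
      by rw [add_sub_cancel]⟩

variable [IsDomain R] {I' : Ideal R[X]} {f' : R[X]}

lemma smul_mem_smul_iff (hb : b ≠ 0) : b • p ∈ b • I ↔ p ∈ I :=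
  ⟨fun ⟨_, hq, h⟩ => smul_right_injective _ hb h ▸ hq, Submodule.smul_mem_pointwise_smul _ _ _⟩

lemma smul_mem_smulAdjoin_iff (hb : b ≠ 0) (hf : f.Monic) (hfI : f ∈ I) :
    b • p ∈ smulAdjoin b I f ↔ p ∈ I := by
  rw [mem_smulAdjoin_iff hf hfI, smul_modByMonic, smul_mem_smul_iff hb, modByMonic_mem_iff hfI]

lemma smulAdjoin_left_injective (hb : b ≠ 0) (hf : f.Monic) (hfI : f ∈ I) (hf' : f'.Monic)
    (hfI' : f' ∈ I') (h : smulAdjoin b I f = smulAdjoin b I' f') : I = I' :=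
  Ideal.ext fun p => by
    rw [← smul_mem_smulAdjoin_iff hb hf hfI, h, smul_mem_smulAdjoin_iff hb hf' hfI']

lemma eq_of_mem_monicAdjunctions (hb : b ≠ 0) {d : ℕ} (hJ : J ∈ monicAdjunctions b I d)
    (hJ' : J ∈ monicAdjunctions b I' d) : I = I' := by
  obtain ⟨f, hfI, hf, -, rfl⟩ := hJ
  obtain ⟨f', hfI', hf', -, h⟩ := hJ'
  exact smulAdjoin_left_injective hb hf hfI hf' hfI' h.symm

lemma degreeLE_smulAdjoin (hb : b ≠ 0) (hf : f.Monic) (hfI : f ∈ I) (hm : m < f.natDegree) :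
    (smulAdjoin b I f).degreeLE m = b • I.degreeLE m := by
  have hdeg {p : R[X]} (hp : p.degree ≤ m) : p.degree < f.degree :=
    hp.trans_lt (degree_eq_natDegree hf.ne_zero ▸ Nat.cast_lt.2 hm)
  ext p
  rw [mem_degreeLE_iff]
  constructor
  · rintro ⟨hp, hpm⟩
    obtain ⟨r, hr, rfl⟩ := (mem_smulAdjoin_iff_of_degree_lt hf hfI (hdeg hpm)).1 hp
    refine Submodule.smul_mem_pointwise_smul _ _ _ (mem_degreeLE_iff.2 ⟨hr, ?_⟩)
    rwa [DistribSMul.toLinearMap_apply, degree_smul_of_smul_regular _ (.of_ne_zero hb)] at hpm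
  · rintro ⟨r, hr, rfl⟩
    obtain ⟨hrI, hrm⟩ := mem_degreeLE_iff.1 hr
    exact ⟨smul_le_smulAdjoin (Submodule.smul_mem_pointwise_smul _ _ _ hrI),
      (degree_smul_le _ _).trans hrm⟩

lemma leadingCoeffNth_smulAdjoin (hb : b ≠ 0) (hf : f.Monic) (hfI : f ∈ I)
    (hm : m < f.natDegree) :
    (smulAdjoin b I f).leadingCoeffNth m = Ideal.span {b} * I.leadingCoeffNth m := by
  ext x
  rw [Ideal.mem_span_singleton_mul, mem_leadingCoeffNth_iff_coeff, degreeLE_smulAdjoin hb hf hfI hm]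
  constructor
  · rintro ⟨_, ⟨r, hr, rfl⟩, rfl⟩
    exact ⟨r.coeff m, mem_leadingCoeffNth_iff_coeff.2 ⟨r, hr, rfl⟩, (coeff_smul b r m).symm⟩
  · rintro ⟨_, hz, rfl⟩
    obtain ⟨r, hr, rfl⟩ := mem_leadingCoeffNth_iff_coeff.1 hz
    exact ⟨b • r, Submodule.smul_mem_pointwise_smul _ _ _ hr, coeff_smul b r m⟩

lemma smulAdjoin_add_eq_iff (hb : b ≠ 0) (hf : f.Monic) (hfI : f ∈ I) (hfm : f.natDegree = m + 1)
    {r s : R[X]} (hr : r ∈ I.degreeLE m) (hs : s ∈ I.degreeLE m) :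
    smulAdjoin b I (f + r) = smulAdjoin b I (f + s) ↔ -r + s ∈ b • I.degreeLE m := by
  have hadd {r : R[X]} (hr : r ∈ I.degreeLE m) :
      f + r ∈ I ∧ (f + r).Monic ∧ (f + r).natDegree = m + 1 :=
    (mem_and_monic_and_natDegree_eq_iff hf hfI hfm).2 (by rwa [add_sub_cancel_left])
  obtain ⟨hrI, hrmonic, hrm⟩ := hadd hr
  obtain ⟨-, hsmonic, hsm⟩ := hadd hs
  have hdeg : (f + s).degree = (f + r).degree := by
    rw [degree_eq_natDegree hrmonic.ne_zero, degree_eq_natDegree hsmonic.ne_zero, hrm, hsm]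
  have hsub : -r + s ∈ I.degreeLE m := add_mem (neg_mem hr) hs
  rw [eq_comm, ← degreeLE_smulAdjoin hb hf hfI (by omega), mem_degreeLE_iff,
    and_iff_left (mem_degreeLE_iff.1 hsub).2, mem_smulAdjoin_iff_of_degree_lt hf hfI
      ((degree_le_iff_degree_lt_of_natDegree_eq_succ hfm).1 (mem_degreeLE_iff.1 hsub).2),
    smulAdjoin_eq_smulAdjoin_iff hsmonic hrmonic hrI hdeg, add_sub_add_left_eq_sub,
    neg_add_eq_sub]

end SMulAdjoin

/-! ### The index of `bI + (f)` -/

section Index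

lemma relIndex_smul_self_eq_of_relIndex_ne_zero {α A : Type*} [Monoid α] [AddGroup A]
    [DistribMulAction α A] {a : α} (ha : Function.Injective (a • · : A → A)) {H K : AddSubgroup A}
    (hHK : H ≤ K) (hindex : H.relIndex K ≠ 0) (hH : a • H ≤ H) (hK : a • K ≤ K) :
    (a • H).relIndex H = (a • K).relIndex K := by
  refine Nat.eq_of_mul_eq_mul_right (Nat.pos_of_ne_zero hindex) ?_
  calc (a • H).relIndex H * H.relIndex K
      = (a • H).relIndex K := AddSubgroup.relIndex_mul_relIndex _ _ _ hH hHK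
    _ = (a • H).relIndex (a • K) * (a • K).relIndex K :=
      (AddSubgroup.relIndex_mul_relIndex _ _ _ (AddSubgroup.map_mono hHK) hK).symm
    _ = (a • K).relIndex K * H.relIndex K := by
      rw [mul_comm]
      exact congrArg _ (AddSubgroup.relIndex_map_map_of_injective H K ha)

variable {R : Type*} [CommRing R] {I : Ideal R[X]} {f p : R[X]} {b : R} {m : ℕ}

lemma smul_toAddSubgroup_le {M : Type*} [AddCommGroup M] [Module R M] (N : Submodule R M) :
    b • N.toAddSubgroup ≤ N.toAddSubgroup := by
  rintro _ ⟨x, hx, rfl⟩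
  exact N.smul_mem b hx

/-- The residues modulo `b` of the coefficients of `X ^ i` with `i ≤ m`. On the polynomials of
degree at most `m` the kernel of this map consists of the multiples of `b`. -/
noncomputable def coeffsMod (b : R) (m : ℕ) : R[X] →ₗ[R] Fin (m + 1) → R ⧸ Ideal.span {b} :=
  LinearMap.pi fun i => (Ideal.span {b}).mkQ ∘ₗ lcoeff R i

lemma coeffsMod_eq_zero_iff : coeffsMod b m p = 0 ↔ ∀ i ≤ m, b ∣ p.coeff i := by
  simp only [coeffsMod, funext_iff, LinearMap.pi_apply, LinearMap.comp_apply, lcoeff_apply,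
    Submodule.mkQ_apply, Pi.zero_apply, Submodule.Quotient.mk_eq_zero, Ideal.mem_span_singleton,
    Fin.forall_iff, Nat.lt_succ_iff]

lemma map_coeffsMod_degreeLE : (degreeLE R m).map (coeffsMod b m) = ⊤ := by
  refine eq_top_iff.2 fun v _ => ?_
  choose w hw using fun i => Submodule.mkQ_surjective (Ideal.span {b}) (v i)
  let q := (degreeLTEquiv R (m + 1)).symm w
  have hq (i : Fin (m + 1)) : (q : R[X]).coeff i = w i :=
    congrFun ((degreeLTEquiv R (m + 1)).apply_symm_apply w) i
  refine ⟨q, degreeLT_succ_eq_degreeLE (R := R) ▸ q.2, funext fun i => ?_⟩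
  rw [← hw i, ← hq i]
  rfl

variable [IsDomain R]

lemma smul_degreeLE_eq_ker_inf (hb : b ≠ 0) :
    b • degreeLE R (m : WithBot ℕ) = LinearMap.ker (coeffsMod b m) ⊓ degreeLE R m := by
  ext p
  rw [Submodule.mem_inf, LinearMap.mem_ker, coeffsMod_eq_zero_iff]
  constructor
  · rintro ⟨q, hq, rfl⟩
    exact ⟨fun i _ => ⟨q.coeff i, coeff_smul b q i⟩, Submodule.smul_mem _ b hq⟩
  · rintro ⟨hdvd, hp⟩
    obtain ⟨q, rfl⟩ : C b ∣ p := (C_dvd_iff_dvd_coeff _ _).2 fun i => by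
      rcases le_or_gt i m with hi | hi
      · exact hdvd i hi
      · rw [coeff_eq_zero_of_degree_lt ((mem_degreeLE.1 hp).trans_lt (Nat.cast_lt.2 hi))]
        exact dvd_zero b
    rw [mem_degreeLE, degree_C_mul hb] at hp
    rw [← smul_eq_C_mul]
    exact Submodule.smul_mem_pointwise_smul _ _ _ (mem_degreeLE.2 hp)

lemma relIndex_smul_polynomial_degreeLE (hb : b ≠ 0) :
    (b • (degreeLE R (m : WithBot ℕ)).toAddSubgroup).relIndex
      (degreeLE R (m : WithBot ℕ)).toAddSubgroup = Nat.card (R ⧸ Ideal.span {b}) ^ (m + 1) := by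
  have hsmul : b • (degreeLE R (m : WithBot ℕ)).toAddSubgroup =
      (coeffsMod b m).toAddMonoidHom.ker ⊓ (degreeLE R (m : WithBot ℕ)).toAddSubgroup :=
    congrArg Submodule.toAddSubgroup (smul_degreeLE_eq_ker_inf hb)
  have hmap : (degreeLE R (m : WithBot ℕ)).toAddSubgroup.map (coeffsMod b m).toAddMonoidHom = ⊤ :=
    (congrArg Submodule.toAddSubgroup (map_coeffsMod_degreeLE (b := b) (m := m)) :)
  rw [hsmul, AddSubgroup.inf_relIndex_right, AddSubgroup.relIndex_ker, hmap, AddSubgroup.card_top,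
    Nat.card_fun, Nat.card_fin]

lemma relIndex_smul_degreeLE [Finite (R[X] ⧸ I)] (hb : b ≠ 0) :
    (b • (I.degreeLE m).toAddSubgroup).relIndex (I.degreeLE m).toAddSubgroup =
      Nat.card (R ⧸ Ideal.span {b}) ^ (m + 1) := by
  have hI : (Submodule.toAddSubgroup I).index ≠ 0 := Nat.card_ne_zero.2 ⟨inferInstance, ‹_›⟩
  have hindex : (I.degreeLE m).toAddSubgroup.relIndex
      (degreeLE R (m : WithBot ℕ)).toAddSubgroup ≠ 0 := by
    have hinf : (I.degreeLE m).toAddSubgroup =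
        (degreeLE R (m : WithBot ℕ)).toAddSubgroup ⊓ Submodule.toAddSubgroup I := rfl
    rw [hinf, AddSubgroup.inf_relIndex_left]
    exact ne_zero_of_dvd_ne_zero hI (AddSubgroup.relIndex_dvd_index_of_normal _ _)
  exact (relIndex_smul_self_eq_of_relIndex_ne_zero (smul_right_injective R[X] hb)
    (Submodule.toAddSubgroup_mono inf_le_left) hindex (smul_toAddSubgroup_le _)
    (smul_toAddSubgroup_le _)).trans (relIndex_smul_polynomial_degreeLE hb)

lemma relIndex_smulAdjoin (hb : b ≠ 0) (hf : f.Monic) (hfI : f ∈ I) (hfm : f.natDegree = m + 1) :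
    (Submodule.toAddSubgroup (smulAdjoin b I f)).relIndex (Submodule.toAddSubgroup I) =
      (b • (I.degreeLE m).toAddSubgroup).relIndex (I.degreeLE m).toAddSubgroup := by
  have hinf : b • (I.degreeLE m).toAddSubgroup =
      (I.degreeLE m).toAddSubgroup ⊓ Submodule.toAddSubgroup (smulAdjoin b I f) := by
    refine SetLike.ext fun p => ?_
    have hmem : p ∈ b • I.degreeLE m ↔ p ∈ I.degreeLE m ∧ p ∈ smulAdjoin b I f := by
      rw [← degreeLE_smulAdjoin hb hf hfI (by omega), mem_degreeLE_iff, mem_degreeLE_iff]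
      exact ⟨fun ⟨hp, hpm⟩ => ⟨⟨smulAdjoin_le hfI hp, hpm⟩, hp⟩, fun ⟨⟨_, hpm⟩, hp⟩ => ⟨hp, hpm⟩⟩
    exact hmem
  rw [← degreeLE_sup_smulAdjoin (b := b) hf hfI hfm, AddSubgroup.relIndex_sup_right, hinf,
    AddSubgroup.inf_relIndex_left]

lemma card_quotient_smulAdjoin (hb : b ≠ 0) (hf : f.Monic) (hfI : f ∈ I)
    (hfm : f.natDegree = m + 1) :
    Nat.card (R[X] ⧸ smulAdjoin b I f) =
      Nat.card (R ⧸ Ideal.span {b}) ^ (m + 1) * Nat.card (R[X] ⧸ I) := by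
  have hindex (J : Ideal R[X]) : (Submodule.toAddSubgroup J).index = Nat.card (R[X] ⧸ J) := rfl
  rw [← hindex, ← AddSubgroup.relIndex_mul_index (K := Submodule.toAddSubgroup I)
    (smulAdjoin_le hfI), relIndex_smulAdjoin hb hf hfI hfm, hindex]
  rcases finite_or_infinite (R[X] ⧸ I) with hI | hI
  · rw [relIndex_smul_degreeLE hb]
  · rw [Nat.card_eq_zero_of_infinite (α := R[X] ⧸ I), mul_zero, mul_zero]

lemma card_monicAdjunctions (hb : b ≠ 0) (hf : f.Monic) (hfI : f ∈ I)
    (hfm : f.natDegree = m + 1) : Nat.card (monicAdjunctions b I (m + 1)) =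
      (b • (I.degreeLE m).toAddSubgroup).relIndex (I.degreeLE m).toAddSubgroup := by
  rw [← range_smulAdjoin_add hf hfI hfm, ← Nat.card_congr (Setoid.quotientKerEquivRange _)]
  refine Nat.card_congr (Quotient.congrRight fun r s => ?_)
  rw [QuotientAddGroup.leftRel_apply]
  exact smulAdjoin_add_eq_iff hb hf hfI hfm r.2 s.2

end Index

/-! ### Jumps -/

section Jumps

variable {R : Type*} [CommRing R] {𝔟 𝔟' : ℕ+ → Ideal R} {I J : Ideal R[X]} {b : R} {m : ℕ}

/-- `J` contains a monic polynomial of degree `m`, and for `1 ≤ i ≤ m` the ideal `𝔟 i` is the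
quotient of the ideals of coefficients of `X ^ (i - 1)` and of `X ^ i` in the elements of `J` of
degree at most `i - 1` and `i`, respectively. The ideals `𝔟 i` with `i > m` are unconstrained. -/
def HasJumps (𝔟 : ℕ+ → Ideal R) (m : ℕ) (J : Ideal R[X]) : Prop :=
  J.leadingCoeffNth m = ⊤ ∧
    ∀ k < m, J.leadingCoeffNth k = 𝔟 k.succPNat * J.leadingCoeffNth (k + 1)

lemma hasJumps_zero_iff : HasJumps 𝔟 0 J ↔ J = ⊤ := by
  simp [HasJumps, Ideal.eq_top_iff_one, Ideal.mem_leadingCoeffNth_zero]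

lemma HasJumps.apply_ne_bot {k : ℕ} (hJ : HasJumps 𝔟 m J) (hbot : J.leadingCoeffNth 0 ≠ ⊥)
    (hk : k < m) : 𝔟 k.succPNat ≠ ⊥ := by
  intro h𝔟
  have hzero : J.leadingCoeffNth k = ⊥ := by rw [hJ.2 k hk, h𝔟, Ideal.bot_mul]
  exact hbot (le_bot_iff.1 (hzero ▸ J.leadingCoeffNth_mono (Nat.zero_le k)))

section Dedekind

variable [IsDedekindDomain R]

lemma exists_hasJumps (hJ : J.leadingCoeffNth m = ⊤) :
    ∃ 𝔟 : ℕ+ → Ideal R, (∀ i : ℕ+, m < i → 𝔟 i = ⊤) ∧ HasJumps 𝔟 m J := by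
  have hdvd (k : ℕ) : J.leadingCoeffNth (k + 1) ∣ J.leadingCoeffNth k :=
    Ideal.dvd_iff_le.2 (J.leadingCoeffNth_mono k.le_succ)
  choose 𝔠 h𝔠 using hdvd
  refine ⟨fun i => if m < i then ⊤ else 𝔠 i.natPred, fun i hi => if_pos hi, hJ, fun k hk => ?_⟩
  have hk' : ¬m < (k.succPNat : ℕ) := Nat.not_lt.2 hk
  simp only [if_neg hk', Nat.natPred_succPNat]
  rw [h𝔠 k, mul_comm]

lemma HasJumps.unique (hJ : HasJumps 𝔟 m J) (hJ' : HasJumps 𝔟' m J)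
    (hbot : J.leadingCoeffNth 0 ≠ ⊥) (h𝔟 : ∀ i : ℕ+, m < i → 𝔟 i = ⊤)
    (h𝔟' : ∀ i : ℕ+, m < i → 𝔟' i = ⊤) : 𝔟 = 𝔟' := by
  funext i
  obtain ⟨k, rfl⟩ : ∃ k : ℕ, k.succPNat = i := ⟨i.natPred, i.succPNat_natPred⟩
  rcases lt_or_ge k m with hk | hk
  · have hsucc : J.leadingCoeffNth (k + 1) ≠ ⊥ :=
      ne_bot_of_le_ne_bot hbot (J.leadingCoeffNth_mono (Nat.zero_le _))
    exact mul_right_cancel₀ hsucc ((hJ.2 k hk).symm.trans (hJ'.2 k hk))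
  · have hlt : m < (k.succPNat : ℕ) := Nat.lt_succ_of_le hk
    rw [h𝔟 _ hlt, h𝔟' _ hlt]

end Dedekind

variable [IsDomain R]

lemma HasJumps.of_mem_monicAdjunctions (hb : b ≠ 0) (h𝔟 : 𝔟 m.succPNat = Ideal.span {b})
    (hI : HasJumps 𝔟 m I) (hJ : J ∈ monicAdjunctions b I (m + 1)) : HasJumps 𝔟 (m + 1) J := by
  obtain ⟨f, hfI, hf, hfm, rfl⟩ := hJ
  have hcoeff {k : ℕ} (hk : k ≤ m) :
      (smulAdjoin b I f).leadingCoeffNth k = Ideal.span {b} * I.leadingCoeffNth k :=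
    leadingCoeffNth_smulAdjoin hb hf hfI (hfm ▸ Nat.lt_succ_of_le hk)
  have htop : (smulAdjoin b I f).leadingCoeffNth (m + 1) = ⊤ :=
    hfm ▸ leadingCoeffNth_eq_top_of_monic_mem hf self_mem_smulAdjoin
  refine ⟨htop, fun k hk => ?_⟩
  rcases (Nat.lt_succ_iff.1 hk).eq_or_lt with rfl | hk
  · rw [hcoeff le_rfl, hI.1, htop, h𝔟]
  · rw [hcoeff hk.le, hcoeff hk, hI.2 k hk, mul_left_comm]

lemma HasJumps.exists_mem_monicAdjunctions (hb : b ≠ 0) (h𝔟 : 𝔟 m.succPNat = Ideal.span {b})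
    (hJ : HasJumps 𝔟 (m + 1) J) : ∃ I, HasJumps 𝔟 m I ∧ J ∈ monicAdjunctions b I (m + 1) := by
  have hJm : J.leadingCoeffNth m = Ideal.span {b} := by
    rw [hJ.2 m m.lt_succ_self, hJ.1, Ideal.mul_top, h𝔟]
  obtain ⟨f, hfJ, hf, hfm⟩ := exists_monic_mem_of_leadingCoeffNth_eq_top hJ.1
  obtain ⟨I, hfI, rfl⟩ := exists_eq_smulAdjoin hf hfJ hfm hJm
  have hcoeff {k : ℕ} (hk : k ≤ m) :
      (smulAdjoin b I f).leadingCoeffNth k = Ideal.span {b} * I.leadingCoeffNth k :=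
    leadingCoeffNth_smulAdjoin hb hf hfI (hfm ▸ Nat.lt_succ_of_le hk)
  refine ⟨I, ⟨?_, fun k hk => ?_⟩, f, hfI, hf, hfm, rfl⟩
  · rwa [hcoeff le_rfl, ← Ideal.mul_top (Ideal.span {b}), mul_assoc,
      Ideal.span_singleton_mul_right_inj hb, Ideal.top_mul] at hJm
  · rw [← Ideal.span_singleton_mul_right_inj hb, ← hcoeff hk.le, hJ.2 k (hk.trans m.lt_succ_self),
      hcoeff hk, mul_left_comm]

end Jumps

/-! ### Sequences with given product -/

section Finprod

lemma finprod_pnat_eq_prod_range {M : Type*} [CommMonoid M] {g : ℕ+ → M} {n : ℕ}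
    (hg : ∀ i : ℕ+, n < i → g i = 1) : ∏ᶠ i, g i = ∏ k ∈ range n, g k.succPNat := by
  rw [← finprod_comp_equiv Equiv.pnatEquivNat.symm]
  refine finprod_eq_prod_of_mulSupport_subset _ fun k hk => mem_coe.2 (mem_range.2 ?_)
  by_contra! hnk
  exact hk (hg k.succPNat (Nat.lt_succ_of_le hnk))

variable {a : ℕ+ → ℕ} {n : ℕ}

lemma pow_dvd_finprod_pow (ha : {i | a i ≠ 1}.Finite) (i : ℕ+) :
    a i ^ (i : ℕ) ∣ ∏ᶠ j : ℕ+, a j ^ (j : ℕ) :=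
  finprod_mem_dvd i (ha.subset fun j hj hone => hj (by simp only [hone, one_pow]))

lemma ne_zero_of_finprod_pow_ne_zero (ha : {i | a i ≠ 1}.Finite)
    (hprod : ∏ᶠ j : ℕ+, a j ^ (j : ℕ) ≠ 0) (i : ℕ+) : a i ≠ 0 :=
  ne_zero_pow i.ne_zero (ne_zero_of_dvd_ne_zero hprod (pow_dvd_finprod_pow ha i))

lemma eq_one_of_finprod_pow_lt (ha : {i | a i ≠ 1}.Finite)
    (hprod : ∏ᶠ j : ℕ+, a j ^ (j : ℕ) ≠ 0) {i : ℕ+} (hi : ∏ᶠ j : ℕ+, a j ^ (j : ℕ) < i) :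
    a i = 1 := by
  by_contra hone
  have htwo : 2 ≤ a i :=
    (Nat.two_le_iff _).2 ⟨ne_zero_of_finprod_pow_ne_zero ha hprod i, hone⟩
  refine hi.not_ge ?_
  calc (i : ℕ) ≤ 2 ^ (i : ℕ) := Nat.lt_two_pow_self.le
    _ ≤ a i ^ (i : ℕ) := Nat.pow_le_pow_left htwo _
    _ ≤ _ := Nat.le_of_dvd (Nat.pos_of_ne_zero hprod) (pow_dvd_finprod_pow ha i)

lemma finite_and_finprod_pow_eq_iff (hn : n ≠ 0) :
    ({i | a i ≠ 1}.Finite ∧ ∏ᶠ i : ℕ+, a i ^ (i : ℕ) = n) ↔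
      (∀ i : ℕ+, n < i → a i = 1) ∧ ∏ k ∈ range n, a k.succPNat ^ (k + 1) = n := by
  have hrange (ha : ∀ i : ℕ+, n < i → a i = 1) :
      ∏ᶠ i : ℕ+, a i ^ (i : ℕ) = ∏ k ∈ range n, a k.succPNat ^ (k + 1) :=
    finprod_pnat_eq_prod_range fun i hi => by rw [ha i hi, one_pow]
  constructor
  · rintro ⟨hfin, rfl⟩
    have ha (i : ℕ+) := eq_one_of_finprod_pow_lt hfin hn (i := i)
    exact ⟨ha, (hrange ha).symm⟩
  · rintro ⟨ha, hprod⟩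
    refine ⟨(Set.finite_Iic n.succPNat).subset fun i hi => ?_, (hrange ha).trans hprod⟩
    refine Set.mem_Iic.2 (PNat.coe_le_coe _ _ |>.1 ?_)
    exact (not_lt.1 (mt (ha i) hi)).trans n.le_succ

end Finprod

/-! ### Counting ideals with given jumps -/

section Count

lemma card_subtype_eq_card_mul {ι α : Type*} {r : ι → α → Prop} {q : α → Prop} {k : ℕ}
    (hk : k ≠ 0) (hcard : ∀ i, Nat.card {x // r i x} = k) (hrq : ∀ i x, r i x → q x)
    (hunique : ∀ x, q x → ∃! i, r i x) : Nat.card {x // q x} = Nat.card ι * k := by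
  have e (i : ι) : {x // r i x} ≃ Fin k :=
    have : Finite {x // r i x} := (Nat.card_ne_zero.1 ((hcard i).trans_ne hk)).2
    Finite.equivFinOfCardEq (hcard i)
  let φ : (Σ i, {x // r i x}) → {x // q x} := fun y => ⟨y.2, hrq y.1 y.2 y.2.2⟩
  have hφ : φ.Bijective := by
    refine ⟨?_, fun ⟨x, hx⟩ => ?_⟩
    · rintro ⟨i, x, hx⟩ ⟨j, y, hy⟩ h
      obtain rfl : x = y := congrArg Subtype.val h
      obtain rfl : i = j := (hunique x (hrq i x hx)).unique hx hy
      rfl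
    · obtain ⟨i, hi, -⟩ := hunique x hx
      exact ⟨⟨i, x, hi⟩, rfl⟩
  rw [← Nat.card_eq_of_bijective φ hφ, Nat.card_congr ((Equiv.sigmaCongrRight e).trans
    (Equiv.sigmaEquivProd ι (Fin k))), Nat.card_prod, Nat.card_fin]

variable {R : Type*} [CommRing R] {𝔟 : ℕ+ → Ideal R} {J : Ideal R[X]} {m n : ℕ}

lemma card_quotient_eq_one_iff {𝔞 : Ideal R} : Nat.card (R ⧸ 𝔞) = 1 ↔ 𝔞 = ⊤ :=
  Submodule.cardQuot_eq_one_iff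

lemma finite_and_finprod_card_pow_eq_iff (hn : n ≠ 0) :
    ({i | 𝔟 i ≠ ⊤}.Finite ∧ ∏ᶠ i : ℕ+, Nat.card (R ⧸ 𝔟 i) ^ (i : ℕ) = n) ↔
      (∀ i : ℕ+, n < i → 𝔟 i = ⊤) ∧
        ∏ k ∈ range n, Nat.card (R ⧸ 𝔟 k.succPNat) ^ (k + 1) = n := by
  simpa only [ne_eq, card_quotient_eq_one_iff] using
    finite_and_finprod_pow_eq_iff (a := fun i => Nat.card (R ⧸ 𝔟 i)) hn

lemma ne_bot_of_finite_quotient [Infinite R] {𝔞 : Ideal R} [Finite (R ⧸ 𝔞)] : 𝔞 ≠ ⊥ := by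
  rintro rfl
  exact not_finite_iff_infinite.2 ‹Infinite R›
    (Finite.of_equiv (R ⧸ (⊥ : Ideal R)) (RingEquiv.quotientBot R).toEquiv)

lemma card_ne_zero_and_ne_bot_of_prod_ne_zero [Infinite R]
    (hprod : ∏ k ∈ range n, Nat.card (R ⧸ 𝔟 k.succPNat) ^ (k + 1) ≠ 0) {k : ℕ} (hk : k < n) :
    Nat.card (R ⧸ 𝔟 k.succPNat) ≠ 0 ∧ 𝔟 k.succPNat ≠ ⊥ := by
  have hcard := ne_zero_pow k.succ_ne_zero (prod_ne_zero_iff.1 hprod k (mem_range.2 hk))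
  have := (Nat.card_ne_zero.1 hcard).2
  exact ⟨hcard, ne_bot_of_finite_quotient⟩

variable [IsPrincipalIdealRing R]

lemma exists_ne_zero_eq_span {𝔞 : Ideal R} (h𝔞 : 𝔞 ≠ ⊥) : ∃ b ≠ 0, 𝔞 = Ideal.span {b} := by
  obtain ⟨b, rfl⟩ := IsPrincipalIdealRing.principal 𝔞
  exact ⟨b, fun hb => h𝔞 (Ideal.span_singleton_eq_bot.2 hb), rfl⟩

variable [IsDomain R]

lemma HasJumps.card_quotient (h𝔟 : ∀ k < m, 𝔟 k.succPNat ≠ ⊥) (hJ : HasJumps 𝔟 m J) :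
    Nat.card (R[X] ⧸ J) = ∏ k ∈ range m, Nat.card (R ⧸ 𝔟 k.succPNat) ^ (k + 1) := by
  induction m generalizing J with
  | zero =>
    rw [hasJumps_zero_iff.1 hJ, range_zero, prod_empty]
    exact card_quotient_eq_one_iff.2 rfl
  | succ m ih =>
    obtain ⟨b, hb, hb𝔟⟩ := exists_ne_zero_eq_span (h𝔟 m m.lt_succ_self)
    obtain ⟨I, hI, f, hfI, hf, hfm, rfl⟩ := hJ.exists_mem_monicAdjunctions hb hb𝔟
    rw [card_quotient_smulAdjoin hb hf hfI hfm, ← hb𝔟,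
      ih (fun k hk => h𝔟 k (hk.trans m.lt_succ_self)) hI, prod_range_succ, mul_comm]

lemma card_hasJumps (h𝔟 : ∀ k < m, 𝔟 k.succPNat ≠ ⊥)
    (hcard : ∀ k < m, Nat.card (R ⧸ 𝔟 k.succPNat) ≠ 0) :
    Nat.card {J // HasJumps 𝔟 m J} = ∏ k ∈ range m, Nat.card (R ⧸ 𝔟 k.succPNat) ^ (k + 1) := by
  induction m with
  | zero => simp only [hasJumps_zero_iff, range_zero, prod_empty, Nat.card_unique]
  | succ m ih =>
    have hlt {k : ℕ} (hk : k < m) : k < m + 1 := hk.trans m.lt_succ_self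
    obtain ⟨b, hb, hb𝔟⟩ := exists_ne_zero_eq_span (h𝔟 m m.lt_succ_self)
    rw [prod_range_succ, ← ih (fun k hk => h𝔟 k (hlt hk)) fun k hk => hcard k (hlt hk)]
    refine card_subtype_eq_card_mul
      (r := fun (I : {I // HasJumps 𝔟 m I}) J => J ∈ monicAdjunctions b I.1 (m + 1))
      (pow_ne_zero _ (hcard m m.lt_succ_self)) (fun ⟨I, hI⟩ => ?_)
      (fun I _ hJ => I.2.of_mem_monicAdjunctions hb hb𝔟 hJ) fun J hJ => ?_
    · have hfinite : Finite (R[X] ⧸ I) := by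
        refine (Nat.card_ne_zero.1 ?_).2
        rw [hI.card_quotient fun k hk => h𝔟 k (hlt hk)]
        exact prod_ne_zero_iff.2 fun k hk => pow_ne_zero _ (hcard k (hlt (mem_range.1 hk)))
      obtain ⟨f, hfI, hf, hfm⟩ := exists_monic_mem_of_leadingCoeffNth_eq_top
        (top_le_iff.1 (hI.1 ▸ I.leadingCoeffNth_mono m.le_succ))
      rw [hb𝔟, ← relIndex_smul_degreeLE (I := I) hb]
      exact card_monicAdjunctions hb hf hfI hfm
    · obtain ⟨I, hI, hIJ⟩ := hJ.exists_mem_monicAdjunctions hb hb𝔟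
      exact ⟨⟨I, hI⟩, hIJ, fun I' hI'J => Subtype.ext (eq_of_mem_monicAdjunctions hb hI'J hIJ)⟩

lemma existsUnique_hasJumps [Infinite R] (hn : n ≠ 0) (hJ : Nat.card (R[X] ⧸ J) = n) :
    ∃! 𝔟 : {𝔟 : ℕ+ → Ideal R // (∀ i : ℕ+, n < i → 𝔟 i = ⊤) ∧
      ∏ k ∈ range n, Nat.card (R ⧸ 𝔟 k.succPNat) ^ (k + 1) = n}, HasJumps 𝔟.1 n J := by
  have hfinite : Finite (R[X] ⧸ J) := (Nat.card_ne_zero.1 (hJ.trans_ne hn)).2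
  have hbot : J.leadingCoeffNth 0 ≠ ⊥ := leadingCoeffNth_zero_ne_bot
  obtain ⟨𝔟, h𝔟, hjumps⟩ := exists_hasJumps (hJ ▸ leadingCoeffNth_card_quotient_eq_top (J := J))
  have hprod := (hjumps.card_quotient fun _ => hjumps.apply_ne_bot hbot).symm.trans hJ
  exact ⟨⟨𝔟, h𝔟, hprod⟩, hjumps,
    fun 𝔟' hjumps' => Subtype.ext (hjumps'.unique hjumps hbot 𝔟'.2.1 h𝔟)⟩

end Count

/-! ### The ring of integers -/

section Int

lemma card_int_quotient_span (b : ℕ) : Nat.card (ℤ ⧸ Ideal.span {(b : ℤ)}) = b := by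
  rw [Nat.card_congr (Int.quotientSpanNatEquivZMod b).toEquiv, Nat.card_zmod]

lemma int_span_natCast_eq_top_iff {b : ℕ} : Ideal.span {(b : ℤ)} = ⊤ ↔ b = 1 := by
  rw [← card_quotient_eq_one_iff, card_int_quotient_span]

lemma exists_pnat_eq_int_span {𝔞 : Ideal ℤ} (h𝔞 : Nat.card (ℤ ⧸ 𝔞) ≠ 0) :
    ∃ b : ℕ+, Ideal.span {((b : ℕ) : ℤ)} = 𝔞 :=
  ⟨⟨Nat.card (ℤ ⧸ 𝔞), Nat.pos_of_ne_zero h𝔞⟩, Int.ideal_span_absNorm_eq_self 𝔞⟩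

lemma card_pnat_sequences_eq_card_int_ideal_sequences {n : ℕ} (hn : n ≠ 0) :
    Nat.card {b : ℕ+ → ℕ+ // {i | b i ≠ 1}.Finite ∧ ∏ᶠ i : ℕ+, (b i : ℕ) ^ (i : ℕ) = n} =
      Nat.card {𝔟 : ℕ+ → Ideal ℤ //
        {i | 𝔟 i ≠ ⊤}.Finite ∧ ∏ᶠ i : ℕ+, Nat.card (ℤ ⧸ 𝔟 i) ^ (i : ℕ) = n} := by
  let spans (b : ℕ+ → ℕ+) (i : ℕ+) : Ideal ℤ := Ideal.span {((b i : ℕ) : ℤ)}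
  have hspans (b : ℕ+ → ℕ+) :
      ({i | spans b i ≠ ⊤}.Finite ∧ ∏ᶠ i : ℕ+, Nat.card (ℤ ⧸ spans b i) ^ (i : ℕ) = n) ↔
        {i | b i ≠ 1}.Finite ∧ ∏ᶠ i : ℕ+, (b i : ℕ) ^ (i : ℕ) = n := by
    simp only [spans, ne_eq, int_span_natCast_eq_top_iff, card_int_quotient_span,
      PNat.coe_eq_one_iff]
  refine Nat.card_eq_of_bijective (fun b => ⟨spans b.1, (hspans b.1).2 b.2⟩) ⟨?_, ?_⟩
  · refine fun b b' h => Subtype.ext (funext fun i => PNat.eq ?_)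
    rw [← card_int_quotient_span (b.1 i), ← card_int_quotient_span (b'.1 i)]
    exact congrArg (fun 𝔞 : Ideal ℤ => Nat.card (ℤ ⧸ 𝔞)) (congrFun (congrArg Subtype.val h) i)
  · rintro ⟨𝔟, hfin, hprod⟩
    have hcard (i : ℕ+) : Nat.card (ℤ ⧸ 𝔟 i) ≠ 0 :=
      ne_zero_of_finprod_pow_ne_zero (a := fun i => Nat.card (ℤ ⧸ 𝔟 i))
        (by simpa only [ne_eq, card_quotient_eq_one_iff] using hfin) (hprod.trans_ne hn) i
    choose b hb using fun i => exists_pnat_eq_int_span (hcard i)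
    obtain rfl : spans b = 𝔟 := funext hb
    exact ⟨⟨b, (hspans b).1 ⟨hfin, hprod⟩⟩, rfl⟩

end Int

end PolynomialIdealCount

open PolynomialIdealCount in
theorem card_ideals_polynomial_int_general {R : Type*} [CommRing R] [IsDomain R]
    [IsPrincipalIdealRing R] [Infinite R] (n : ℕ) (hn : 0 < n) :
    Nat.card {I : Ideal R[X] // Nat.card (R[X] ⧸ I) = n} =
      n * Nat.card {𝔟 : ℕ+ → Ideal R //
        {i | 𝔟 i ≠ ⊤}.Finite ∧ ∏ᶠ i : ℕ+, Nat.card (R ⧸ 𝔟 i) ^ (i : ℕ) = n} := by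
  simp only [finite_and_finprod_card_pow_eq_iff hn.ne']
  rw [mul_comm]
  have hjump (𝔟 : {𝔟 : ℕ+ → Ideal R // (∀ i : ℕ+, n < i → 𝔟 i = ⊤) ∧
      ∏ k ∈ range n, Nat.card (R ⧸ 𝔟 k.succPNat) ^ (k + 1) = n}) {k : ℕ} (hk : k < n) :=
    card_ne_zero_and_ne_bot_of_prod_ne_zero (𝔟.2.2.trans_ne hn.ne') hk
  refine card_subtype_eq_card_mul hn.ne' (fun 𝔟 => ?_) (fun 𝔟 J hJ => ?_)
    fun J => existsUnique_hasJumps hn.ne'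
  · exact (card_hasJumps (fun k hk => (hjump 𝔟 hk).2) fun k hk => (hjump 𝔟 hk).1).trans 𝔟.2.2
  · exact (hJ.card_quotient fun k hk => (hjump 𝔟 hk).2).trans 𝔟.2.2

/-- Coefficient form of `ζ(ℤ[X], s) = ∏_{i=1}^∞ ζ(i(s-1))`: the number of ideals of `ℤ[X]`
of index `n` equals `n` times the number of finitely supported sequences `(b_i)_{i≥1}` of
positive integers with `∏_i b_i^i = n`. -/
theorem card_ideals_polynomial_int (n : ℕ) (hn : 0 < n) :
    Nat.card {I : Ideal (Polynomial ℤ) // Nat.card (Polynomial ℤ ⧸ I) = n} =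
      n * Nat.card {b : ℕ+ → ℕ+ //
        {i | b i ≠ 1}.Finite ∧ ∏ᶠ i : ℕ+, (b i : ℕ) ^ (i : ℕ) = n} := by
  rw [card_ideals_polynomial_int_general n hn,
    PolynomialIdealCount.card_pnat_sequences_eq_card_int_ideal_sequences hn.ne']
end

section
/- Fix d ≥ 3. Let c_n^{(d)} be the number of subgroups Λ ⊆ ℤ^d of index n such that Λ = ρ_f(I) for some monic polynomial f ∈ ℤ[X] of degree d and some ideal I ⊆ ℤ[X]/(f), where ρ_f is the coordinate isomorphism ℤ[X]/(f) → ℤ^d with respect to the basis 1, X, …, X^{d-1}, and let m_n^{(d)} be the number of all subgroups of ℤ^d of index n. Then the proportion of ideal lattices among all finite-index subgroups tends to zero: lim_{N→∞} (Σ_{n≤N} c_n^{(d)}) / (Σ_{n≤N} m_n^{(d)}) = 0. -/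
open Polynomial Filter Topology

/-!
An ideal lattice is closed under multiplication by `X` whenever the product needs no reduction
modulo `f`. This property is inherited by the vectors `M` of `Λ ⊆ ℤ^(d+1)` whose last coordinate
vanishes, and it makes `Λ` nearly unique given `M`: if the last coordinates of `M` and `Λ` generate
`c a ℤ` and `a ℤ`, then the class in `ℤ^d / M` of a vector of `Λ` with last coordinate `a` solves
`c q = w` for a fixed `w`, which has at most `c ^ d` solutions. Since the index is multiplied by
`a` when passing from `M` to `Λ`, summing over `c` rank by rank leaves `O(N ^ 2)` ideal lattices of
index at most `N` in every rank. On the other hand the kernels of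
`v ↦ v₀ + c₁ v₁ + ⋯ + c_{d-1} v_{d-1}` modulo `n ≤ N` are at least `N ^ d / d` lattices.
-/

/-! ### Subgroups of finite index -/

lemma index_eq_index_comap_mul_index_map {K G Q : Type*} [AddGroup K] [AddGroup G] [AddGroup Q]
    {ι : K →+ G} {π : G →+ Q} (hπ : Function.Surjective π) (hexact : ι.range = π.ker)
    (Λ : AddSubgroup G) [Λ.Normal] : Λ.index = (Λ.comap ι).index * (Λ.map π).index := by
  rw [AddSubgroup.index_map, AddMonoidHom.range_eq_top.2 hπ, AddSubgroup.index_top, mul_one,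
    AddSubgroup.index_comap, hexact, ← AddSubgroup.relIndex_sup_left,
    AddSubgroup.relIndex_mul_index le_sup_left]

lemma eq_zmultiples_index (H : AddSubgroup ℤ) : H = AddSubgroup.zmultiples (H.index : ℤ) := by
  obtain ⟨b, rfl⟩ := Int.subgroup_cyclic H
  rw [← AddSubgroup.zmultiples_eq_closure, Int.index_zmultiples, Int.zmultiples_natAbs]

lemma finite_setOf_index_eq (G : Type*) [AddCommGroup G] [Module.Free ℤ G] [Module.Finite ℤ G]
    (n : ℕ) [NeZero n] : {Λ : AddSubgroup G | Λ.index = n}.Finite := by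
  have ker_le (Λ : AddSubgroup G) (hΛ : Λ.index = n) : (ModN.mkQ n).ker ≤ Λ := by
    intro x hx
    obtain ⟨y, rfl⟩ := (Submodule.Quotient.mk_eq_zero _).1 hx
    simpa [hΛ] using Λ.nsmul_index_mem y
  refine Set.Finite.of_injOn (f := AddSubgroup.map (ModN.mkQ n)) (Set.mapsTo_univ _ _) ?_
    Set.finite_univ
  intro Λ hΛ Λ' hΛ' h
  rw [← AddSubgroup.comap_map_eq_self (ker_le Λ hΛ), h,
    AddSubgroup.comap_map_eq_self (ker_le Λ' hΛ')]

lemma finite_setOf_index_mem_Icc (G : Type*) [AddCommGroup G] [Module.Free ℤ G] [Module.Finite ℤ G]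
    (N : ℕ) : {Λ : AddSubgroup G | Λ.index ∈ Set.Icc 1 N}.Finite := by
  refine ((Set.finite_Icc 1 N).biUnion (t := fun n => {Λ : AddSubgroup G | Λ.index = n})
    fun n hn => ?_).subset fun Λ hΛ => Set.mem_biUnion hΛ rfl
  have : NeZero n := ⟨Nat.one_le_iff_ne_zero.1 hn.1⟩
  exact finite_setOf_index_eq G n

lemma ncard_eq_sum_ncard_fiber {α β : Type*} {S : Set α} (hS : S.Finite) {f : α → β}
    {t : Finset β} (hf : Set.MapsTo f S t) : S.ncard = ∑ b ∈ t, {x ∈ S | f x = b}.ncard := by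
  classical
  lift S to Finset α using hS
  rw [Set.ncard_coe_finset, Finset.card_eq_sum_card_fiberwise hf]
  refine Finset.sum_congr rfl fun b _ => ?_
  rw [← Set.ncard_coe_finset, Finset.coe_filter]
  rfl

/-! ### The last layer of a lattice -/

/-- The inclusion `ℤ^d → ℤ^(d+1)`, `v ↦ (v, 0)`; in terms of polynomials, the vectors of degree
less than `d`. -/
def snocZero (d : ℕ) : (Fin d → ℤ) →+ (Fin (d + 1) → ℤ) :=
  AddMonoidHom.mk' (fun v => Fin.snoc (α := fun _ => ℤ) v 0) fun v w => by
    ext i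
    cases i using Fin.lastCases <;> simp

section

variable {d : ℕ}

@[simp] lemma snocZero_last (v : Fin d → ℤ) : snocZero d v (Fin.last d) = 0 := by simp [snocZero]

lemma snocZero_init {v : Fin (d + 1) → ℤ} (h : v (Fin.last d) = 0) :
    snocZero d (Fin.init v) = v := by
  simpa [snocZero, h] using Fin.snoc_init_self v

lemma range_snocZero :
    (snocZero d).range = (Pi.evalAddMonoidHom (fun _ => ℤ) (Fin.last d)).ker := by
  ext v
  exact ⟨by rintro ⟨w, rfl⟩; exact snocZero_last w, fun hv => ⟨_, snocZero_init hv⟩⟩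

/-- The nonnegative generator of the group of last coordinates of the vectors of `Λ`, that is, the
last diagonal entry of the Hermite normal form. -/
noncomputable def lastLayer (Λ : AddSubgroup (Fin (d + 1) → ℤ)) : ℕ :=
  (Λ.map (Pi.evalAddMonoidHom _ (Fin.last d))).index

variable (Λ : AddSubgroup (Fin (d + 1) → ℤ))

lemma index_eq_index_comap_snocZero_mul_lastLayer :
    Λ.index = (Λ.comap (snocZero d)).index * lastLayer Λ :=
  index_eq_index_comap_mul_index_map (Function.surjective_eval _) range_snocZero Λ

lemma exists_mem_apply_last_iff_dvd {x : ℤ} :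
    (∃ v ∈ Λ, v (Fin.last d) = x) ↔ (lastLayer Λ : ℤ) ∣ x := by
  rw [← Int.mem_zmultiples_iff, lastLayer, ← eq_zmultiples_index]
  rfl

variable {Λ} {Λ' : AddSubgroup (Fin (d + 1) → ℤ)}

lemma init_sub_zsmul_mem_comap {v g : Fin (d + 1) → ℤ} (hv : v ∈ Λ) (hg : g ∈ Λ) {k : ℤ}
    (h : v (Fin.last d) = k * g (Fin.last d)) :
    Fin.init v - k • Fin.init g ∈ Λ.comap (snocZero d) := by
  have hlast : (v - k • g) (Fin.last d) = 0 := by simp [h]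
  change snocZero d (Fin.init (v - k • g)) ∈ Λ
  rw [snocZero_init hlast]
  exact Λ.sub_mem hv (Λ.zsmul_mem hg k)

lemma le_of_comap_le {g : Fin (d + 1) → ℤ} (hg : g ∈ Λ) (hg' : g ∈ Λ')
    (hlast : g (Fin.last d) = lastLayer Λ)
    (hcomap : Λ.comap (snocZero d) ≤ Λ'.comap (snocZero d)) : Λ ≤ Λ' := by
  intro v hv
  obtain ⟨k, hk⟩ := (exists_mem_apply_last_iff_dvd Λ).1 ⟨v, hv, rfl⟩
  have hlast0 : (v - k • g) (Fin.last d) = 0 := by simp [hk, hlast, mul_comm]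
  have hmem : snocZero d (Fin.init (v - k • g)) ∈ Λ' :=
    hcomap (init_sub_zsmul_mem_comap hv hg (by rw [hk, hlast, mul_comm]))
  rw [snocZero_init hlast0] at hmem
  simpa using Λ'.add_mem hmem (Λ'.zsmul_mem hg' k)

/-- A lattice is an extension of `lastLayer Λ • ℤ` by `Λ ∩ ℤ^d`, so it is determined by these two
groups and the class modulo `Λ ∩ ℤ^d` of a lift of the generator. -/
lemma eq_of_init_sub_init_mem {g g' : Fin (d + 1) → ℤ} (hg : g ∈ Λ) (hg' : g' ∈ Λ')
    (hlast : g (Fin.last d) = lastLayer Λ) (hlast' : g' (Fin.last d) = lastLayer Λ')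
    (hlayer : lastLayer Λ = lastLayer Λ') (hcomap : Λ.comap (snocZero d) = Λ'.comap (snocZero d))
    (hsub : Fin.init g - Fin.init g' ∈ Λ.comap (snocZero d)) : Λ = Λ' := by
  have hsub_eq : snocZero d (Fin.init g - Fin.init g') = g - g' :=
    snocZero_init (v := g - g') (by simp [hlast, hlast', hlayer])
  have hgΛ' : g ∈ Λ' := by
    rw [hcomap, AddSubgroup.mem_comap, hsub_eq] at hsub
    simpa using Λ'.add_mem hsub hg'
  exact le_antisymm (le_of_comap_le hg hgΛ' hlast hcomap.le)
    (le_of_comap_le hgΛ' hg (hlast.trans (by rw [hlayer])) hcomap.ge)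

end

lemma lastLayer_injective_rank_one :
    Function.Injective (lastLayer : AddSubgroup (Fin 1 → ℤ) → ℕ) := by
  intro Λ Λ' h
  obtain ⟨g, hg, hlast⟩ := (exists_mem_apply_last_iff_dvd Λ).2 dvd_rfl
  obtain ⟨g', hg', hlast'⟩ := (exists_mem_apply_last_iff_dvd Λ').2 dvd_rfl
  refine eq_of_init_sub_init_mem hg hg' hlast hlast' h (Subsingleton.elim _ _) ?_
  rw [Subsingleton.elim (Fin.init g - Fin.init g') 0]
  exact zero_mem _

/-! ### Shift-closed lattices -/

/-- `Λ` is stable under multiplication by `X` as long as the product has degree at most `d`. No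
modulus `f` enters, so this passes to the vectors of smaller degree. -/
def ShiftClosed {d : ℕ} (Λ : AddSubgroup (Fin (d + 1) → ℤ)) : Prop :=
  ∀ v : Fin d → ℤ, snocZero d v ∈ Λ → (Fin.cons 0 v : Fin (d + 1) → ℤ) ∈ Λ

lemma IsIdealLattice.shiftClosed {d : ℕ} {Λ : AddSubgroup (Fin (d + 1) → ℤ)}
    (h : IsIdealLattice (d + 1) Λ) : ShiftClosed Λ := by
  obtain ⟨f, -, -, I, hI⟩ := h
  intro v hv
  have shift_eq : ∑ i : Fin (d + 1), C ((Fin.cons 0 v : Fin (d + 1) → ℤ) i) * X ^ (i : ℕ) =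
      X * ∑ i : Fin (d + 1), C (snocZero d v i) * X ^ (i : ℕ) := by
    rw [Fin.sum_univ_succ, Fin.sum_univ_castSucc]
    simp [snocZero, Finset.mul_sum, pow_succ', mul_left_comm]
  rw [hI] at hv ⊢
  rw [shift_eq, map_mul]
  exact I.mul_mem_left _ hv

namespace ShiftClosed

variable {d : ℕ} {Λ : AddSubgroup (Fin (d + 2) → ℤ)}

lemma comap_snocZero (h : ShiftClosed Λ) : ShiftClosed (Λ.comap (snocZero (d + 1))) := by
  intro v hv
  have hshift := h _ hv
  simpa [snocZero, Fin.cons_snoc_eq_snoc_cons] using hshift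

lemma lastLayer_dvd_lastLayer_comap (h : ShiftClosed Λ) :
    lastLayer Λ ∣ lastLayer (Λ.comap (snocZero (d + 1))) := by
  obtain ⟨v, hv, hlast⟩ := (exists_mem_apply_last_iff_dvd (Λ.comap (snocZero (d + 1)))).2 dvd_rfl
  rw [← Int.natCast_dvd_natCast, ← hlast]
  exact (exists_mem_apply_last_iff_dvd Λ).1 ⟨_, h v hv, Fin.cons_succ _ _ (Fin.last d)⟩

end ShiftClosed

/-- Multiplication by `c` embeds the differences of two solutions into `M / c M`. -/
lemma encard_setOf_nsmul_eq_le {G : Type*} [AddCommGroup G] [Module.Free ℤ G] [Module.Finite ℤ G]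
    (M : AddSubgroup G) (c : ℕ) [NeZero c] (w : G ⧸ M) :
    {q : G ⧸ M | c • q = w}.encard ≤ (c ^ Module.finrank ℤ G : ℕ) := by
  obtain ⟨w, rfl⟩ := QuotientAddGroup.mk_surjective w
  let M' := AddSubgroup.toIntSubmodule M
  have sub_mem (q : {q : G ⧸ M | c • q = w}) : w - c • q.1.out ∈ M' := by
    have hq : c • (q.1.out : G ⧸ M) = w := by rw [QuotientAddGroup.out_eq']; exact q.2
    exact QuotientAddGroup.eq_iff_sub_mem.1 hq.symm
  let residue (q : {q : G ⧸ M | c • q = w}) : ModN M' c := Submodule.Quotient.mk ⟨_, sub_mem q⟩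
  have residue_injective : Function.Injective residue := by
    intro q r h
    obtain ⟨m, hm⟩ := (Submodule.Quotient.eq _).1 h
    have smul_eq : (c : ℤ) • (m : G) = (c : ℤ) • (r.1.out - q.1.out) := by
      simpa [smul_sub] using congrArg Subtype.val hm
    have out_sub_mem : r.1.out - q.1.out ∈ M := by
      rw [← smul_right_injective G (Nat.cast_ne_zero.2 (NeZero.ne c)) smul_eq]
      exact m.2
    rw [← QuotientAddGroup.eq_iff_sub_mem, QuotientAddGroup.out_eq', QuotientAddGroup.out_eq']
      at out_sub_mem
    exact Subtype.ext out_sub_mem.symm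
  calc {q : G ⧸ M | c • q = w}.encard ≤ ENat.card (ModN M' c) :=
        ENat.card_le_card_of_injective residue_injective
    _ = (c ^ Module.finrank ℤ M' : ℕ) := by rw [ENat.card_eq_coe_natCard, ModN.natCard_eq]
    _ ≤ (c ^ Module.finrank ℤ G : ℕ) := by
      gcongr
      · exact NeZero.one_le
      · exact Submodule.finrank_le M'

/-- The shift-closed lattices of rank `d + 2` with last layer `a` that meet `ℤ^(d+1)` in `M`. -/
def shiftClosedOver {d : ℕ} (M : AddSubgroup (Fin (d + 1) → ℤ)) (a : ℕ) :
    Set (AddSubgroup (Fin (d + 2) → ℤ)) :=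
  {Λ | ShiftClosed Λ ∧ Λ.comap (snocZero (d + 1)) = M ∧ lastLayer Λ = a}

/-- If `h ∈ M` and `g ∈ Λ` have last coordinates `c * a` and `a`, then `X h - c g ∈ M`: the class
of `g` modulo `M`, which determines `Λ`, is a solution of `c q = X h`. -/
lemma encard_shiftClosedOver_le {d a c : ℕ} [NeZero c] {M : AddSubgroup (Fin (d + 1) → ℤ)}
    (hM : lastLayer M = c * a) : (shiftClosedOver M a).encard ≤ (c ^ (d + 1) : ℕ) := by
  choose g hg hlast using fun Λ : AddSubgroup (Fin (d + 2) → ℤ) =>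
    (exists_mem_apply_last_iff_dvd Λ).2 dvd_rfl
  obtain ⟨h, hh, hlast_h⟩ := (exists_mem_apply_last_iff_dvd M).2 dvd_rfl
  let Xh : Fin (d + 2) → ℤ := Fin.cons 0 h
  have hlast_Xh : Xh (Fin.last (d + 1)) = c * a := by
    rw [← Nat.cast_mul, ← hM, ← hlast_h]
    exact Fin.cons_succ (α := fun _ => ℤ) 0 h (Fin.last d)
  let liftClass (Λ : AddSubgroup (Fin (d + 2) → ℤ)) : (Fin (d + 1) → ℤ) ⧸ M :=
    (Fin.init (g Λ) : Fin (d + 1) → ℤ)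
  have liftClass_mapsTo : Set.MapsTo liftClass (shiftClosedOver M a)
      {q | c • q = (Fin.init Xh : Fin (d + 1) → ℤ)} := by
    rintro Λ ⟨hshift, hcomap, hlayer⟩
    refine Eq.symm (QuotientAddGroup.eq_iff_sub_mem.2 ?_)
    rw [← hcomap] at hh ⊢
    simpa using init_sub_zsmul_mem_comap (hshift h hh) (hg Λ) (k := c)
      (by rw [hlast, hlayer]; exact hlast_Xh)
  have liftClass_injOn : Set.InjOn liftClass (shiftClosedOver M a) := by
    rintro Λ ⟨-, hcomap, hlayer⟩ Λ' ⟨-, hcomap', hlayer'⟩ heq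
    exact eq_of_init_sub_init_mem (hg Λ) (hg Λ') (hlast Λ) (hlast Λ')
      (hlayer.trans hlayer'.symm) (hcomap.trans hcomap'.symm)
      (hcomap ▸ QuotientAddGroup.eq_iff_sub_mem.1 heq)
  simpa using (Set.encard_le_encard_of_injOn liftClass_mapsTo liftClass_injOn).trans
    (encard_setOf_nsmul_eq_le M c _)

/-! ### Counting shift-closed lattices -/

/-- Shift-closed lattices of rank `d + 1` with finite index at most `N` and last layer `a`. -/
def shiftClosedLattices (d a N : ℕ) : Set (AddSubgroup (Fin (d + 1) → ℤ)) :=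
  {Λ | ShiftClosed Λ ∧ Λ.index ∈ Set.Icc 1 N ∧ lastLayer Λ = a}

lemma finite_shiftClosedLattices (d a N : ℕ) : (shiftClosedLattices d a N).Finite :=
  (finite_setOf_index_mem_Icc _ N).subset fun _ hΛ => hΛ.2.1

lemma ncard_shiftClosedLattices_rank_one_le (a N : ℕ) : (shiftClosedLattices 0 a N).ncard ≤ 1 :=
  (Set.ncard_le_one_iff (finite_shiftClosedLattices 0 a N)).2 fun hΛ hΛ' =>
    lastLayer_injective_rank_one (hΛ.2.2.trans hΛ'.2.2.symm)

lemma lastLayer_mem_Icc {d N : ℕ} {Λ : AddSubgroup (Fin (d + 1) → ℤ)}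
    (hΛ : Λ.index ∈ Set.Icc 1 N) : lastLayer Λ ∈ Set.Icc 1 N := by
  rw [index_eq_index_comap_snocZero_mul_lastLayer] at hΛ
  exact ⟨Nat.pos_of_mul_pos_left hΛ.1,
    (Nat.le_mul_of_pos_left _ (Nat.pos_of_mul_pos_right hΛ.1)).trans hΛ.2⟩

lemma comap_index_mem_Icc {d N : ℕ} {Λ : AddSubgroup (Fin (d + 1) → ℤ)}
    (hΛ : Λ.index ∈ Set.Icc 1 N) : (Λ.comap (snocZero d)).index ∈ Set.Icc 1 (N / lastLayer Λ) := by
  rw [index_eq_index_comap_snocZero_mul_lastLayer] at hΛ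
  exact ⟨Nat.pos_of_mul_pos_right hΛ.1,
    (Nat.le_div_iff_mul_le (Nat.pos_of_mul_pos_left hΛ.1)).2 hΛ.2⟩

lemma exists_comap_mem_shiftClosedLattices {d a N : ℕ} {Λ : AddSubgroup (Fin (d + 2) → ℤ)}
    (hΛ : Λ ∈ shiftClosedLattices (d + 1) a N) :
    ∃ c ∈ Finset.Icc 1 (N / a / a),
      Λ.comap (snocZero (d + 1)) ∈ shiftClosedLattices d (c * a) (N / a) := by
  obtain ⟨hshift, hindex, rfl⟩ := hΛ
  have hindex_comap := comap_index_mem_Icc hindex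
  obtain ⟨hpos, hle⟩ := lastLayer_mem_Icc hindex_comap
  obtain ⟨c, hc⟩ := hshift.lastLayer_dvd_lastLayer_comap
  rw [mul_comm] at hc
  rw [hc] at hpos hle
  refine ⟨c, Finset.mem_Icc.2 ⟨Nat.pos_of_mul_pos_right hpos, ?_⟩, hshift.comap_snocZero,
    hindex_comap, hc⟩
  exact (Nat.le_div_iff_mul_le (Nat.pos_of_mul_pos_left hpos)).2 hle

lemma ncard_shiftClosedLattices_succ_le (d a N : ℕ) :
    (shiftClosedLattices (d + 1) a N).ncard ≤ ∑ c ∈ Finset.Icc 1 (N / a / a),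
      c ^ (d + 1) * (shiftClosedLattices d (c * a) (N / a)).ncard := by
  let bases (c : ℕ) := (finite_shiftClosedLattices d (c * a) (N / a)).toFinset
  have cover : shiftClosedLattices (d + 1) a N ⊆
      ⋃ c ∈ Finset.Icc 1 (N / a / a), ⋃ M ∈ bases c, shiftClosedOver M a := by
    intro Λ hΛ
    obtain ⟨c, hc, hcomap⟩ := exists_comap_mem_shiftClosedLattices hΛ
    exact Set.mem_biUnion hc (Set.mem_biUnion (by simpa [bases] using hcomap) ⟨hΛ.1, rfl, hΛ.2.2⟩)
  have encard_over_le (c : ℕ) (hc : c ∈ Finset.Icc 1 (N / a / a)) :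
      (⋃ M ∈ bases c, shiftClosedOver M a).encard ≤
        (c ^ (d + 1) * (shiftClosedLattices d (c * a) (N / a)).ncard : ℕ) := by
    have : NeZero c := ⟨Nat.one_le_iff_ne_zero.1 (Finset.mem_Icc.1 hc).1⟩
    calc _ ≤ ∑ M ∈ bases c, (shiftClosedOver M a).encard := Finset.set_encard_biUnion_le _ _
      _ ≤ ∑ _M ∈ bases c, ((c ^ (d + 1) : ℕ) : ℕ∞) := by
        refine Finset.sum_le_sum fun M hM => encard_shiftClosedOver_le ?_
        exact ((Set.Finite.mem_toFinset _).1 hM).2.2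
      _ = _ := by
        rw [Finset.sum_const, nsmul_eq_mul, mul_comm, Nat.cast_mul,
          Set.ncard_eq_toFinset_card _ (finite_shiftClosedLattices d (c * a) (N / a))]
  have encard_le := (Set.encard_le_encard cover).trans
    ((Finset.set_encard_biUnion_le _ _).trans (Finset.sum_le_sum encard_over_le))
  rw [← Nat.cast_sum] at encard_le
  exact (Set.encard_le_coe_iff_finite_ncard_le.1 encard_le).2

lemma sum_Icc_inv_pow_le_two {k : ℕ} (hk : 2 ≤ k) (N : ℕ) :
    ∑ c ∈ Finset.Icc 1 N, ((c : ℝ) ^ k)⁻¹ ≤ 2 := by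
  calc ∑ c ∈ Finset.Icc 1 N, ((c : ℝ) ^ k)⁻¹ ≤ ∑ c ∈ Finset.Icc 1 N, ((c : ℝ) ^ 2)⁻¹ := by
        refine Finset.sum_le_sum fun c hc => ?_
        have hc : (1 : ℝ) ≤ c := by exact_mod_cast (Finset.mem_Icc.1 hc).1
        gcongr
    _ = ∑ c ∈ Finset.Ioo 0 (N + 1), ((c : ℝ) ^ 2)⁻¹ := rfl
    _ ≤ 2 := by simpa using sum_Ioo_inv_sq_le (α := ℝ) 0 (N + 1)

lemma ncard_shiftClosedLattices_rank_two_le (a N : ℕ) :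
    ((shiftClosedLattices 1 a N).ncard : ℝ) ≤ (N / a ^ 2 : ℝ) ^ 2 := by
  have hK : ((N / a / a : ℕ) : ℝ) ≤ N / a ^ 2 := by
    rw [Nat.div_div_eq_div_mul, ← pow_two]
    exact_mod_cast Nat.cast_div_le
  have hcard : (shiftClosedLattices 1 a N).ncard ≤ (N / a / a) ^ 2 :=
    calc (shiftClosedLattices 1 a N).ncard
        ≤ ∑ c ∈ Finset.Icc 1 (N / a / a), c ^ 1 * (shiftClosedLattices 0 (c * a) (N / a)).ncard :=
          ncard_shiftClosedLattices_succ_le 0 a N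
      _ ≤ ∑ _c ∈ Finset.Icc 1 (N / a / a), N / a / a := by
          refine Finset.sum_le_sum fun c hc => ?_
          simpa using Nat.mul_le_mul (Finset.mem_Icc.1 hc).2
            (ncard_shiftClosedLattices_rank_one_le (c * a) (N / a))
      _ = (N / a / a) ^ 2 := by simp [pow_two]
  calc ((shiftClosedLattices 1 a N).ncard : ℝ)
      ≤ ((N / a / a : ℕ) : ℝ) ^ 2 := by exact_mod_cast hcard
    _ ≤ (N / a ^ 2 : ℝ) ^ 2 := by gcongr

lemma ncard_shiftClosedLattices_le (m a N : ℕ) :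
    ((shiftClosedLattices (m + 1) a N).ncard : ℝ) ≤ 2 ^ m * (N / a ^ (m + 2) : ℝ) ^ 2 := by
  induction m generalizing a N with
  | zero => simpa using ncard_shiftClosedLattices_rank_two_le a N
  | succ m ih =>
    calc ((shiftClosedLattices (m + 2) a N).ncard : ℝ)
        ≤ ∑ c ∈ Finset.Icc 1 (N / a / a),
            (c : ℝ) ^ (m + 2) * (shiftClosedLattices (m + 1) (c * a) (N / a)).ncard := by
          exact_mod_cast ncard_shiftClosedLattices_succ_le (m + 1) a N
      _ ≤ ∑ c ∈ Finset.Icc 1 (N / a / a), (c : ℝ) ^ (m + 2) *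
            (2 ^ m * (((N : ℝ) / a) / (c * a) ^ (m + 2)) ^ 2) := by
          gcongr with c
          refine (ih (c * a) (N / a)).trans ?_
          push_cast
          gcongr
          exact Nat.cast_div_le
      _ = 2 ^ m * (N / a ^ (m + 3) : ℝ) ^ 2 *
            ∑ c ∈ Finset.Icc 1 (N / a / a), ((c : ℝ) ^ (m + 2))⁻¹ := by
          rw [Finset.mul_sum]
          refine Finset.sum_congr rfl fun c hc => ?_
          have hc : (c : ℝ) ≠ 0 := by
            exact_mod_cast Nat.one_le_iff_ne_zero.1 (Finset.mem_Icc.1 hc).1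
          rw [mul_pow]
          field_simp
          ring
      _ ≤ 2 ^ m * (N / a ^ (m + 3) : ℝ) ^ 2 * 2 := by
          gcongr
          exact sum_Icc_inv_pow_le_two (by omega) _
      _ = 2 ^ (m + 1) * (N / a ^ (m + 3) : ℝ) ^ 2 := by ring

lemma ncard_setOf_shiftClosed_le (m N : ℕ) :
    ({Λ : AddSubgroup (Fin (m + 2) → ℤ) | Λ.index ∈ Set.Icc 1 N ∧ ShiftClosed Λ}.ncard : ℝ) ≤
      2 ^ (m + 1) * (N : ℝ) ^ 2 := by
  have cover : {Λ : AddSubgroup (Fin (m + 2) → ℤ) | Λ.index ∈ Set.Icc 1 N ∧ ShiftClosed Λ} ⊆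
      ⋃ a ∈ Finset.Icc 1 N, shiftClosedLattices (m + 1) a N := fun Λ ⟨hindex, hshift⟩ =>
    Set.mem_biUnion (Finset.mem_coe.2 (Finset.mem_Icc.2 (lastLayer_mem_Icc hindex)))
      ⟨hshift, hindex, rfl⟩
  have hfinite := (Finset.Icc 1 N).finite_toSet.biUnion
    fun a _ => finite_shiftClosedLattices (m + 1) a N
  calc _ ≤ ∑ a ∈ Finset.Icc 1 N, ((shiftClosedLattices (m + 1) a N).ncard : ℝ) := by
        exact_mod_cast (Set.ncard_le_ncard cover hfinite).trans (Finset.set_ncard_biUnion_le _ _)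
    _ ≤ ∑ a ∈ Finset.Icc 1 N, 2 ^ m * (N / a ^ (m + 2) : ℝ) ^ 2 :=
        Finset.sum_le_sum fun a _ => ncard_shiftClosedLattices_le m a N
    _ = 2 ^ m * (N : ℝ) ^ 2 * ∑ a ∈ Finset.Icc 1 N, ((a : ℝ) ^ ((m + 2) * 2))⁻¹ := by
        rw [Finset.mul_sum]
        exact Finset.sum_congr rfl fun a _ => by rw [pow_mul]; ring
    _ ≤ 2 ^ m * (N : ℝ) ^ 2 * 2 := by
        gcongr
        exact sum_Icc_inv_pow_le_two (by omega) N
    _ = 2 ^ (m + 1) * (N : ℝ) ^ 2 := by ring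

lemma sum_natCard_isIdealLattice_le (m N : ℕ) :
    ∑ n ∈ Finset.Icc 1 N, (Nat.card {Λ : AddSubgroup (Fin (m + 2) → ℤ) //
      Λ.index = n ∧ IsIdealLattice (m + 2) Λ} : ℝ) ≤ 2 ^ (m + 1) * (N : ℝ) ^ 2 := by
  let S := {Λ : AddSubgroup (Fin (m + 2) → ℤ) | Λ.index ∈ Set.Icc 1 N ∧ ShiftClosed Λ}
  have hS : S.Finite := (finite_setOf_index_mem_Icc _ N).subset fun _ hΛ => hΛ.1
  refine le_trans ?_ (ncard_setOf_shiftClosed_le m N)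
  rw [ncard_eq_sum_ncard_fiber hS (f := AddSubgroup.index) (t := Finset.Icc 1 N)
    fun _ hΛ => Finset.mem_coe.2 (Finset.mem_Icc.2 hΛ.1), Nat.cast_sum]
  refine Finset.sum_le_sum fun n hn => Nat.cast_le.2 ?_
  refine Set.ncard_le_ncard (s := {Λ | Λ.index = n ∧ IsIdealLattice (m + 2) Λ}) ?_
    (hS.subset (Set.sep_subset _ _))
  rintro Λ ⟨rfl, hideal⟩
  exact ⟨⟨Finset.mem_Icc.1 hn, hideal.shiftClosed⟩, rfl⟩

/-! ### Counting all lattices -/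

/-- The homomorphism `v ↦ v₀ + c₁ v₁ + ⋯ + c_m v_m` to `ℤ/n`, whose kernel is a lattice of index
`n` that determines `c`. -/
def linearFormMod {m n : ℕ} (c : Fin m → ZMod n) : (Fin (m + 1) → ℤ) →+ ZMod n :=
  AddMonoidHom.mk' (fun v => v 0 + c ⬝ᵥ fun i => (v i.succ : ZMod n)) fun v w => by
    simp only [dotProduct, Pi.add_apply, Int.cast_add, mul_add, Finset.sum_add_distrib]
    ring

lemma index_ker_linearFormMod {m n : ℕ} (c : Fin m → ZMod n) :
    (linearFormMod c).ker.index = n := by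
  have hsurj : Function.Surjective (linearFormMod c) := by
    intro x
    obtain ⟨y, rfl⟩ := ZMod.intCast_surjective x
    exact ⟨Fin.cons y 0, by simp [linearFormMod, dotProduct]⟩
  rw [AddSubgroup.index_ker, AddMonoidHom.range_eq_top.2 hsurj, AddSubgroup.card_top,
    Nat.card_zmod]

lemma ker_linearFormMod_injective (m n : ℕ) :
    Function.Injective fun c : Fin m → ZMod n => (linearFormMod c).ker := by
  intro c c' hker
  ext1 i
  obtain ⟨y, hy⟩ := ZMod.intCast_surjective (c i)
  let v : Fin (m + 1) → ℤ := Fin.cons (-y) (Pi.single i 1)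
  have apply_v (b : Fin m → ZMod n) : linearFormMod b v = b i - c i := by
    have cast_single : (fun j : Fin m => (v j.succ : ZMod n)) = Pi.single i 1 := by
      ext j
      simp [v, Pi.single_apply]
    calc linearFormMod b v = (v 0 : ZMod n) + b ⬝ᵥ fun j => (v j.succ : ZMod n) := rfl
      _ = -c i + b i := by rw [cast_single, dotProduct_single_one]; simp [v, hy]
      _ = b i - c i := by ring
  change (linearFormMod c).ker = (linearFormMod c').ker at hker
  have hv : v ∈ (linearFormMod c').ker := hker ▸ (apply_v c).trans (sub_self _)
  exact (sub_eq_zero.1 ((apply_v c').symm.trans hv)).symm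

lemma pow_le_natCard_index_eq (m n : ℕ) [NeZero n] :
    n ^ m ≤ Nat.card {Λ : AddSubgroup (Fin (m + 1) → ℤ) // Λ.index = n} := by
  have : Finite {Λ : AddSubgroup (Fin (m + 1) → ℤ) // Λ.index = n} := finite_setOf_index_eq _ n
  calc n ^ m = Nat.card (Fin m → ZMod n) := by simp
    _ ≤ _ := Nat.card_le_card_of_injective (fun c => ⟨_, index_ker_linearFormMod c⟩)
      fun _ _ h => ker_linearFormMod_injective m n (congrArg Subtype.val h)

lemma add_one_pow_succ_le (N k : ℕ) : (N + 1) ^ (k + 1) ≤ N ^ (k + 1) + (k + 1) * (N + 1) ^ k := by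
  induction k with
  | zero => simp
  | succ k ih =>
    calc (N + 1) ^ (k + 2) = (N + 1) * (N + 1) ^ (k + 1) := by ring
      _ ≤ (N + 1) * (N ^ (k + 1) + (k + 1) * (N + 1) ^ k) := by gcongr
      _ = N ^ (k + 2) + (k + 1) * (N + 1) ^ (k + 1) + N ^ (k + 1) := by ring
      _ ≤ N ^ (k + 2) + (k + 1) * (N + 1) ^ (k + 1) + (N + 1) ^ (k + 1) := by
        gcongr
        exact N.le_succ
      _ = N ^ (k + 2) + (k + 1 + 1) * (N + 1) ^ (k + 1) := by ring

lemma pow_succ_le_mul_sum_Icc_pow (m N : ℕ) :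
    N ^ (m + 1) ≤ (m + 1) * ∑ n ∈ Finset.Icc 1 N, n ^ m := by
  induction N with
  | zero => simp
  | succ N ih =>
    rw [Finset.sum_Icc_succ_top (by omega), mul_add]
    exact (add_one_pow_succ_le N m).trans (by gcongr)

lemma pow_succ_le_mul_sum_natCard_index_eq (m N : ℕ) :
    (N : ℝ) ^ (m + 1) ≤ (m + 1) * ∑ n ∈ Finset.Icc 1 N,
      (Nat.card {Λ : AddSubgroup (Fin (m + 1) → ℤ) // Λ.index = n} : ℝ) := by
  calc (N : ℝ) ^ (m + 1) ≤ (m + 1) * ∑ n ∈ Finset.Icc 1 N, (n : ℝ) ^ m := by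
        exact_mod_cast pow_succ_le_mul_sum_Icc_pow m N
    _ ≤ _ := by
        gcongr with n hn
        have : NeZero n := ⟨Nat.one_le_iff_ne_zero.1 (Finset.mem_Icc.1 hn).1⟩
        exact_mod_cast pow_le_natCard_index_eq m n

/-- Corollary 4.2: for `d ≥ 3`, the proportion of ideal lattices of index at most `N` among
all finite-index subgroups of `ℤ^d` of index at most `N` tends to zero. -/
theorem ideal_lattice_density_zero (d : ℕ) (hd : 3 ≤ d) :
    Tendsto (fun N : ℕ =>
        (∑ n ∈ Finset.Icc 1 N,
          (Nat.card {Λ : AddSubgroup (Fin d → ℤ) //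
            Λ.index = n ∧ IsIdealLattice d Λ} : ℝ)) /
        (∑ n ∈ Finset.Icc 1 N,
          (Nat.card {Λ : AddSubgroup (Fin d → ℤ) // Λ.index = n} : ℝ)))
      atTop (𝓝 0) := by
  obtain ⟨m, rfl⟩ : ∃ m, d = m + 3 := ⟨d - 3, by omega⟩
  refine squeeze_zero' (.of_forall fun N => by positivity) ?_
    (tendsto_const_div_atTop_nhds_zero_nat (2 ^ (m + 2) * (m + 3 : ℝ)))
  filter_upwards [eventually_ge_atTop 1] with N hN
  have hN' : (1 : ℝ) ≤ N := by exact_mod_cast hN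
  have ideal_le := sum_natCard_isIdealLattice_le (m + 1) N
  have le_all : (N : ℝ) ^ 3 / (m + 3) ≤ ∑ n ∈ Finset.Icc 1 N,
      (Nat.card {Λ : AddSubgroup (Fin (m + 3) → ℤ) // Λ.index = n} : ℝ) := by
    have h := pow_succ_le_mul_sum_natCard_index_eq (m + 2) N
    push_cast at h
    rw [div_le_iff₀' (by positivity)]
    calc (N : ℝ) ^ 3 ≤ N ^ (m + 3) := pow_le_pow_right₀ hN' (by omega)
      _ ≤ _ := by linarith
  calc _ ≤ (2 ^ (m + 2) * (N : ℝ) ^ 2) / (N ^ 3 / (m + 3)) := by gcongr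
    _ = _ := by field_simp
end

section
/- For every positive integer n, the number of ideals I of the ring ℤ[X]/(X²) with |(ℤ[X]/(X²))/I| = n equals Σ_{d ≥ 1, d² ∣ n} d, the sum of all positive integers d whose square divides n. -/
open Polynomial

/-!
An ideal `K` of `R[ε]` has two shadows in `R`: its image `A` under `ε ↦ 0`, and the ideal `E` of
all `y` with `yε ∈ K`. Multiplication by `ε` shows `A ≤ E`, and the exact sequence
`0 → R → R[ε] → R → 0` shows that the index of `K` is the product of the indices of `A` and `E`.
If `A` is generated by a non-zero-divisor `a`, then `K` is determined by `E` and the class modulo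
`E` of those `b` with `a + bε ∈ K`, and every class occurs; so `|R/E|` ideals share the
shadows `A` and `E`. Over `ℤ`, an ideal of index `n > 0` has `E = dℤ` and `A = (n/d)ℤ`, where
`A ≤ E` means `d² ∣ n`, and each such `d` contributes `|ℤ/dℤ| = d` ideals.
-/

open scoped DualNumber nonZeroDivisors

open TrivSqZeroExt (inl inr fstHom inrHom)

/-- The number `a_n(R)` of ideals of index `n` in `R`. As `Nat.card` of an infinite type is `0`,
this has its intended meaning only for `n ≠ 0`, and only if there are finitely many such ideals. -/
noncomputable def numIdealsOfIndex (R : Type*) [CommRing R] (n : ℕ) : ℕ :=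
  Nat.card {I : Ideal R // Nat.card (R ⧸ I) = n}

lemma numIdealsOfIndex_congr {R S : Type*} [CommRing R] [CommRing S] (f : R ≃+* S) (n : ℕ) :
    numIdealsOfIndex R n = numIdealsOfIndex S n := by
  refine Nat.card_congr (f.idealComapOrderIso.symm.toEquiv.subtypeEquiv fun I => ?_)
  rw [Nat.card_congr (Ideal.quotientEquiv I (I.map f) f rfl).toEquiv]
  exact Iff.rfl

lemma index_eq_index_comap_mul_index_map_s18 {G H N : Type*} [AddGroup G] [AddGroup H] [AddGroup N]
    {f : N →+ G} {g : G →+ H} (hfg : f.range = g.ker) (hg : Function.Surjective g)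
    (K : AddSubgroup G) [K.Normal] :
    K.index = (K.comap f).index * (K.map g).index := by
  have index_comap : (K.comap f).index = K.relIndex (K ⊔ g.ker) := by
    rw [AddSubgroup.index_comap, hfg, AddSubgroup.relIndex_sup_left]
  have index_map : (K.map g).index = (K ⊔ g.ker).index := by
    rw [AddSubgroup.index_map, AddMonoidHom.range_eq_top_of_surjective g hg,
      AddSubgroup.index_top, mul_one]
  rw [index_comap, index_map, AddSubgroup.relIndex_mul_index le_sup_left]

lemma card_eq_sum_card_fiber {α β : Type*} (f : α → β) (S : Finset β) (hf : ∀ a, f a ∈ S)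
    (hfin : ∀ b ∈ S, Finite {a // f a = b}) :
    Nat.card α = ∑ b ∈ S, Nat.card {a // f a = b} := by
  have (b : S) : Finite {a // f a = b} := hfin b b.2
  let g (a : α) : S := ⟨f a, hf a⟩
  have fiber_equiv (b : S) : {a // g a = b} ≃ {a // f a = b} :=
    Equiv.subtypeEquivRight fun _ => Subtype.ext_iff
  calc Nat.card α = Nat.card (Σ b : S, {a // f a = b}) :=
        Nat.card_congr ((Equiv.sigmaFiberEquiv g).symm.trans (Equiv.sigmaCongrRight fiber_equiv))
    _ = ∑ b : S, Nat.card {a // f a = b} := Nat.card_sigma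
    _ = ∑ b ∈ S, Nat.card {a // f a = b} :=
        Finset.sum_coe_sort S fun b => Nat.card {a // f a = b}

section DualNumber

variable {R : Type*} [CommRing R]

lemma root_X_sq_mul_self : AdjoinRoot.root (X ^ 2 : R[X]) * AdjoinRoot.root (X ^ 2) = 0 := by
  rw [← sq, ← AdjoinRoot.mk_X, ← map_pow, AdjoinRoot.mk_self]

/-- The isomorphism `R[X]/(X²) ≃ R[ε]` sending the class of `X` to `ε`. -/
noncomputable def adjoinRootXSqEquivDualNumber : AdjoinRoot (X ^ 2 : R[X]) ≃ₐ[R] R[ε] :=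
  AlgEquiv.ofAlgHom
    (AdjoinRoot.liftAlgHom (X ^ 2) (Algebra.ofId R R[ε]) DualNumber.eps
      (by rw [eval₂_X_pow, DualNumber.eps_pow_two]))
    (DualNumber.lift ⟨(Algebra.ofId R _, AdjoinRoot.root (X ^ 2)),
      root_X_sq_mul_self, fun _ => Commute.all _ _⟩)
    (DualNumber.algHom_ext (by simp))
    (AdjoinRoot.algHom_ext (by simp))

/-- The image of an ideal of `R[ε]` under `ε ↦ 0`. -/
def fstIdeal (K : Ideal R[ε]) : Ideal R :=
  K.map (fstHom R R R)

/-- The ideal of all `y : R` with `yε ∈ K`. -/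
def epsIdeal (K : Ideal R[ε]) : Ideal R :=
  (K.restrictScalars R).comap (inrHom R R)

lemma fstHom_surjective : Function.Surjective (fstHom R R R) :=
  fun x => ⟨inl x, rfl⟩

lemma mem_fstIdeal {K : Ideal R[ε]} {x : R} : x ∈ fstIdeal K ↔ ∃ z ∈ K, z.fst = x :=
  Ideal.mem_map_iff_of_surjective (fstHom R R R) fstHom_surjective

lemma mem_epsIdeal {K : Ideal R[ε]} {y : R} : y ∈ epsIdeal K ↔ (inr y : R[ε]) ∈ K :=
  Iff.rfl

lemma fstIdeal_le_epsIdeal (K : Ideal R[ε]) : fstIdeal K ≤ epsIdeal K := by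
  intro x hx
  obtain ⟨z, hz, rfl⟩ := mem_fstIdeal.1 hx
  have eps_mul : DualNumber.eps * z = inr z.fst := by ext <;> simp
  exact mem_epsIdeal.2 (eps_mul ▸ K.mul_mem_left DualNumber.eps hz)

lemma card_quotient_eq_card_epsIdeal_mul_card_fstIdeal (K : Ideal R[ε]) :
    Nat.card (R[ε] ⧸ K) = Nat.card (R ⧸ epsIdeal K) * Nat.card (R ⧸ fstIdeal K) := by
  let ι : R →+ R[ε] := (inrHom R R).toAddMonoidHom
  let π : R[ε] →+ R := (fstHom R R R : R[ε] →+ R)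
  have exact_at_middle : ι.range = π.ker := by
    ext z
    refine ⟨?_, fun hz => ⟨z.snd, TrivSqZeroExt.ext (Eq.symm hz) rfl⟩⟩
    rintro ⟨y, rfl⟩
    exact TrivSqZeroExt.fst_inr R y
  have map_fst : K.toAddSubgroup.map π = (fstIdeal K).toAddSubgroup := by
    ext x
    exact mem_fstIdeal.symm
  have key := index_eq_index_comap_mul_index_map_s18 exact_at_middle fstHom_surjective K.toAddSubgroup
  rw [map_fst] at key
  exact key

lemma sq_card_quotient_epsIdeal_dvd (K : Ideal R[ε]) :
    Nat.card (R ⧸ epsIdeal K) ^ 2 ∣ Nat.card (R[ε] ⧸ K) := by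
  rw [card_quotient_eq_card_epsIdeal_mul_card_fstIdeal, sq]
  exact Nat.mul_dvd_mul_left _ (AddSubgroup.index_dvd_of_le (fstIdeal_le_epsIdeal K))

/-- The ideal of `R[ε]` generated, as an `R`-module, by `Eε` and `a + bε`; it is closed under
multiplication by `ε` because `a ∈ E`. As it depends only on the class of `b` modulo `E`, this
class is taken as the parameter. -/
def latticeIdeal {a : R} {E : Ideal R} (ha : a ∈ E) (b : R ⧸ E) : Ideal R[ε] where
  carrier := {z | ∃ k : R, z.fst = k * a ∧ Ideal.Quotient.mk E z.snd = k • b}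
  zero_mem' := ⟨0, by simp⟩
  add_mem' := by
    rintro z w ⟨k, hzk, hzb⟩ ⟨l, hwl, hwb⟩
    exact ⟨k + l, by simp [hzk, hwl, add_mul], by simp [hzb, hwb, add_smul]⟩
  smul_mem' := by
    rintro c z ⟨k, hzk, hzb⟩
    refine ⟨c.fst * k, by simp [hzk, mul_assoc], ?_⟩
    have hz : Ideal.Quotient.mk E z.fst = 0 :=
      Ideal.Quotient.eq_zero_iff_mem.2 (hzk ▸ E.mul_mem_left k ha)
    simp [hz, hzb, Algebra.smul_def, mul_assoc]

section latticeIdeal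

variable {a : R} {E : Ideal R} (ha : a ∈ E)

lemma mem_latticeIdeal {b : R ⧸ E} {z : R[ε]} :
    z ∈ latticeIdeal ha b ↔ ∃ k : R, z.fst = k * a ∧ Ideal.Quotient.mk E z.snd = k • b :=
  Iff.rfl

lemma inl_add_inr_mem_latticeIdeal (y : R) :
    (inl a + inr y : R[ε]) ∈ latticeIdeal ha (Ideal.Quotient.mk E y) :=
  ⟨1, by simp, by simp⟩

lemma fstIdeal_latticeIdeal (b : R ⧸ E) : fstIdeal (latticeIdeal ha b) = Ideal.span {a} := by
  obtain ⟨y, rfl⟩ := Ideal.Quotient.mk_surjective b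
  refine le_antisymm (fun x hx => ?_) ?_
  · obtain ⟨z, ⟨k, hk, -⟩, rfl⟩ := mem_fstIdeal.1 hx
    exact Ideal.mem_span_singleton'.2 ⟨k, hk.symm⟩
  · rw [Ideal.span_singleton_le_iff_mem]
    exact mem_fstIdeal.2 ⟨_, inl_add_inr_mem_latticeIdeal ha y, by simp⟩

lemma epsIdeal_latticeIdeal (ha₀ : a ∈ R⁰) (b : R ⧸ E) : epsIdeal (latticeIdeal ha b) = E := by
  ext y
  rw [mem_epsIdeal, mem_latticeIdeal, ← Ideal.Quotient.eq_zero_iff_mem, TrivSqZeroExt.fst_inr,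
    TrivSqZeroExt.snd_inr]
  constructor
  · rintro ⟨k, hk, hy⟩
    rw [hy, (mul_right_mem_nonZeroDivisors_eq_zero_iff ha₀).1 hk.symm, zero_smul]
  · intro hy
    exact ⟨0, by simp, by simp [hy]⟩

lemma latticeIdeal_injective (ha₀ : a ∈ R⁰) :
    Function.Injective (latticeIdeal ha : R ⧸ E → Ideal R[ε]) := by
  intro b b' hbb'
  obtain ⟨y, rfl⟩ := Ideal.Quotient.mk_surjective b
  obtain ⟨k, hk, hy⟩ := (mem_latticeIdeal ha).1 (hbb' ▸ inl_add_inr_mem_latticeIdeal ha y)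
  have k_eq_one : k = 1 := by
    refine (mul_cancel_right_mem_nonZeroDivisors ha₀).1 ?_
    simpa using hk.symm
  simpa [k_eq_one] using hy

end latticeIdeal

lemma eq_latticeIdeal_of_fstIdeal_eq_span {K : Ideal R[ε]} {w : R[ε]} (hw : w ∈ K)
    (hK : fstIdeal K = Ideal.span {w.fst}) (hwE : w.fst ∈ epsIdeal K) :
    K = latticeIdeal hwE (Ideal.Quotient.mk (epsIdeal K) w.snd) := by
  have mem_iff (z : R[ε]) (k : R) (hk : z.fst = k * w.fst) :
      z ∈ K ↔ Ideal.Quotient.mk (epsIdeal K) z.snd = k • Ideal.Quotient.mk (epsIdeal K) w.snd := by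
    have sub_eq : z - inl k * w = inr (z.snd - k * w.snd) := by ext <;> simp [hk]
    rw [← K.sub_mem_iff_left (K.mul_mem_left (inl k) hw), sub_eq, ← mem_epsIdeal,
      ← Ideal.Quotient.eq, map_mul, Algebra.smul_def, Ideal.Quotient.algebraMap_eq]
  ext z
  rw [mem_latticeIdeal]
  constructor
  · intro hz
    have hzfst : z.fst ∈ Ideal.span {w.fst} := hK ▸ mem_fstIdeal.2 ⟨z, hz, rfl⟩
    obtain ⟨k, hk⟩ := Ideal.mem_span_singleton'.1 hzfst
    exact ⟨k, hk.symm, (mem_iff z k hk.symm).1 hz⟩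
  · rintro ⟨k, hk, hzb⟩
    exact (mem_iff z k hk).2 hzb

lemma card_ideals_fstIdeal_epsIdeal {a : R} {E : Ideal R} (ha₀ : a ∈ R⁰) (ha : a ∈ E) :
    Nat.card {K : Ideal R[ε] // fstIdeal K = Ideal.span {a} ∧ epsIdeal K = E} =
      Nat.card (R ⧸ E) := by
  let F (b : R ⧸ E) : {K : Ideal R[ε] // fstIdeal K = Ideal.span {a} ∧ epsIdeal K = E} :=
    ⟨latticeIdeal ha b, fstIdeal_latticeIdeal ha b, epsIdeal_latticeIdeal ha ha₀ b⟩
  refine (Nat.card_eq_of_bijective F ⟨fun b b' h => ?_, ?_⟩).symm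
  · exact latticeIdeal_injective ha ha₀ (congrArg Subtype.val h)
  · rintro ⟨K, hKa, rfl⟩
    obtain ⟨w, hw, rfl⟩ := mem_fstIdeal.1 (hKa ▸ Ideal.mem_span_singleton_self a)
    exact ⟨Ideal.Quotient.mk _ w.snd,
      Subtype.ext (eq_latticeIdeal_of_fstIdeal_eq_span hw hKa ha).symm⟩

end DualNumber

section Int

lemma card_int_quotient_eq_iff {I : Ideal ℤ} {m : ℕ} :
    Nat.card (ℤ ⧸ I) = m ↔ I = Ideal.span {(m : ℤ)} := by
  rw [← Submodule.cardQuot_apply, ← Ideal.absNorm_apply]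
  constructor
  · rintro rfl
    exact (Int.ideal_span_absNorm_eq_self I).symm
  · rintro rfl
    simp

variable {n : ℕ}

lemma card_quotient_eq_and_card_epsIdeal_eq_iff {d : ℕ} (hd : 0 < d) (hdn : d ∣ n)
    (K : Ideal ℤ[ε]) :
    Nat.card (ℤ[ε] ⧸ K) = n ∧ Nat.card (ℤ ⧸ epsIdeal K) = d ↔
      fstIdeal K = Ideal.span {((n / d : ℕ) : ℤ)} ∧ epsIdeal K = Ideal.span {(d : ℤ)} := by
  rw [← card_int_quotient_eq_iff, ← card_int_quotient_eq_iff,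
    card_quotient_eq_card_epsIdeal_mul_card_fstIdeal]
  refine and_congr_left fun hK => ?_
  rw [hK, Nat.eq_div_iff_mul_eq_left hd.ne' hdn, mul_comm, eq_comm]

lemma card_ideals_index_eq_card_epsIdeal_eq (hn : 0 < n) {d : ℕ} (hdn : d ^ 2 ∣ n) :
    Nat.card {K : Ideal ℤ[ε] // Nat.card (ℤ[ε] ⧸ K) = n ∧ Nat.card (ℤ ⧸ epsIdeal K) = d} = d := by
  have d_dvd : d ∣ n := (dvd_pow_self d two_ne_zero).trans hdn
  have hd : 0 < d := Nat.pos_of_dvd_of_pos d_dvd hn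
  have quot_ne_zero : ((n / d : ℕ) : ℤ) ≠ 0 := by
    exact_mod_cast (Nat.div_pos (Nat.le_of_dvd hn d_dvd) hd).ne'
  have quot_mem : ((n / d : ℕ) : ℤ) ∈ Ideal.span {(d : ℤ)} :=
    Ideal.mem_span_singleton.2 (Int.natCast_dvd_natCast.2 (Nat.dvd_div_of_mul_dvd (sq d ▸ hdn)))
  simp_rw [card_quotient_eq_and_card_epsIdeal_eq_iff hd d_dvd]
  rw [card_ideals_fstIdeal_epsIdeal (mem_nonZeroDivisors_of_ne_zero quot_ne_zero) quot_mem,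
    card_int_quotient_eq_iff]

lemma numIdealsOfIndex_dualNumber_int (hn : 0 < n) :
    numIdealsOfIndex ℤ[ε] n = ∑ d ∈ (Finset.Icc 1 n).filter (fun d => d ^ 2 ∣ n), d := by
  let f (K : {K : Ideal ℤ[ε] // Nat.card (ℤ[ε] ⧸ K) = n}) : ℕ := Nat.card (ℤ ⧸ epsIdeal K.1)
  have card_fiber {d : ℕ} (hd : d ^ 2 ∣ n) : Nat.card {K // f K = d} = d :=
    (Nat.card_congr (Equiv.subtypeSubtypeEquivSubtypeInter _ _)).trans
      (card_ideals_index_eq_card_epsIdeal_eq hn hd)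
  rw [numIdealsOfIndex, card_eq_sum_card_fiber f {d ∈ Finset.Icc 1 n | d ^ 2 ∣ n}]
  · exact Finset.sum_congr rfl fun d hd => card_fiber (Finset.mem_filter.1 hd).2
  · intro K
    have sq_dvd : f K ^ 2 ∣ n := K.2 ▸ sq_card_quotient_epsIdeal_dvd K.1
    have dvd : f K ∣ n := (dvd_pow_self _ two_ne_zero).trans sq_dvd
    exact Finset.mem_filter.2
      ⟨Finset.mem_Icc.2 ⟨Nat.pos_of_dvd_of_pos dvd hn, Nat.le_of_dvd hn dvd⟩, sq_dvd⟩
  · intro d hd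
    obtain ⟨hd_Icc, hdn⟩ := Finset.mem_filter.1 hd
    refine Nat.finite_of_card_ne_zero ?_
    rw [card_fiber hdn]
    exact Nat.ne_of_gt (Finset.mem_Icc.1 hd_Icc).1

end Int

/-- Coefficient form of `ζ(ℤ[X]/(X²), s) = ζ(s)·ζ(2s-1)`: the number of ideals of the ring
of dual numbers `ℤ[X]/(X²)` of index `n` equals the sum of all positive integers `d` with
`d² ∣ n`. -/
theorem card_ideals_dual_numbers (n : ℕ) (hn : 0 < n) :
    Nat.card {I : Ideal (Polynomial ℤ ⧸ Ideal.span {(X ^ 2 : Polynomial ℤ)}) //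
        Nat.card ((Polynomial ℤ ⧸ Ideal.span {(X ^ 2 : Polynomial ℤ)}) ⧸ I) = n} =
      ∑ d ∈ (Finset.Icc 1 n).filter (fun d => d ^ 2 ∣ n), d :=
  (numIdealsOfIndex_congr adjoinRootXSqEquivDualNumber.toRingEquiv n).trans
    (numIdealsOfIndex_dualNumber_int hn)
end
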